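/- arXiv:2403.20243 — 4 statements merged into one kernel-verified Lean document; each statement's English description precedes it below -/
import Mathlib

section
/- Let E be a separable Banach space, let μ be a centered Gaussian probability measure on E with full topological support, and let V : E → ℝ be Borel measurable. Suppose there is an open set U₀ ⊆ E on which V is continuously Fréchet differentiable, and a point f ∈ U₀ at which the Fréchet derivative d_f V is nonzero. Then there exists an open neighborhood O ⊆ U₀ of f such that the measure B ↦ μ(O ∩ V⁻¹(B)) on the Borel sets B ⊆ ℝ (the pushforward under V of the restriction of μ to O) is absolutely continuous with respect to Lebesgue measure on ℝ. -/
open MeasureTheory ProbabilityTheory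

/-!
Let `L` be the derivative of `V` at `f`. Projecting `x` linearly onto `L x` under `μ` produces a
direction `k` with `L k = 1` such that `x - L x • k` and `L x` are uncorrelated, hence independent
because they are jointly Gaussian. Since `L x` has a Gaussian density, `μ` is a mixture of
absolutely continuous measures on lines parallel to `k`. Near `f` the function `V` is a small
Lipschitz perturbation of `L`, so it is antilipschitz along each of these lines, and the preimage of
a Lebesgue null set meets every such line in a null set. Fubini concludes.
-/

open Set
open scoped Topology NNReal ENNReal

section Antilipschitz

lemma hausdorffMeasure_inter_preimage_le {X Y : Type*} [EMetricSpace X] [EMetricSpace Y]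
    [MeasurableSpace X] [BorelSpace X] [MeasurableSpace Y] [BorelSpace Y]
    {s : Set X} {g : X → Y} {K : ℝ≥0} {d : ℝ} (hg : AntilipschitzWith K (s.domRestrict g))
    (hd : 0 ≤ d) (t : Set Y) :
    Measure.hausdorffMeasure d (s ∩ g ⁻¹' t) ≤ (K : ℝ≥0∞) ^ d * Measure.hausdorffMeasure d t :=
  calc Measure.hausdorffMeasure d (s ∩ g ⁻¹' t)
    _ = Measure.hausdorffMeasure d (Subtype.val '' (s.domRestrict g ⁻¹' t)) := by
      rw [domRestrict_eq, preimage_comp, Subtype.image_preimage_coe]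
    _ = Measure.hausdorffMeasure d (s.domRestrict g ⁻¹' t) :=
      isometry_subtype_coe.hausdorffMeasure_image (.inl hd) _
    _ ≤ (K : ℝ≥0∞) ^ d * Measure.hausdorffMeasure d t := hg.hausdorffMeasure_preimage_le hd t

lemma volume_inter_preimage_eq_zero {s N : Set ℝ} {g : ℝ → ℝ} {K : ℝ≥0}
    (hg : AntilipschitzWith K (s.domRestrict g)) (hN : volume N = 0) :
    volume (s ∩ g ⁻¹' N) = 0 := by
  have h := hausdorffMeasure_inter_preimage_le hg zero_le_one N
  rwa [hausdorffMeasure_real, hN, mul_zero, nonpos_iff_eq_zero] at h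

variable {𝕜 E F : Type*} [NontriviallyNormedField 𝕜] [NormedAddCommGroup E] [NormedSpace 𝕜 E]
  [NormedAddCommGroup F] [NormedSpace 𝕜 F]

lemma antilipschitzWith_line_of_approximatesLinearOn {V : E → F} {L : E →L[𝕜] F} {s : Set E}
    {c : ℝ≥0} (hV : ApproximatesLinearOn V L s c) {k : E} (hk : c * ‖k‖₊ < ‖L k‖₊) (x : E) :
    AntilipschitzWith (‖L k‖₊ - c * ‖k‖₊)⁻¹
      (((fun t : 𝕜 ↦ x + t • k) ⁻¹' s).domRestrict fun t ↦ V (x + t • k)) := by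
  refine AntilipschitzWith.of_le_mul_dist fun ⟨t, ht⟩ ⟨u, hu⟩ ↦ ?_
  have happrox := hV _ ht _ hu
  have hdiff : x + t • k - (x + u • k) = (t - u) • k := by module
  rw [hdiff, map_smul, norm_smul] at happrox
  have hgap : (‖L k‖ - c * ‖k‖) * ‖t - u‖ ≤ ‖V (x + t • k) - V (x + u • k)‖ := by
    have htriangle := norm_le_norm_add_norm_sub (V (x + t • k) - V (x + u • k)) ((t - u) • L k)
    rw [norm_smul] at htriangle
    linarith
  have hpos : 0 < ‖L k‖ - c * ‖k‖ := sub_pos.2 (mod_cast hk)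
  rw [NNReal.coe_inv, NNReal.coe_sub hk.le, inv_mul_eq_div, le_div_iff₀' (by simpa using hpos)]
  simpa [Subtype.dist_eq, dist_eq_norm] using hgap

lemma exists_isOpen_approximatesLinearOn {V : E → F} {L : E →L[𝕜] F} {f : E}
    (hV : HasStrictFDerivAt V L f) {U : Set E} (hU : U ∈ 𝓝 f) {c : ℝ≥0} (hc : 0 < c) :
    ∃ O, IsOpen O ∧ f ∈ O ∧ O ⊆ U ∧ ApproximatesLinearOn V L O c := by
  obtain ⟨s, hs, hVs⟩ := hV.approximates_deriv_on_nhds (.inr hc)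
  obtain ⟨O, hO, hO_open, hfO⟩ := mem_nhds_iff.1 (Filter.inter_mem hU hs)
  exact ⟨O, hO_open, hfO, hO.trans inter_subset_left, hVs.mono_set (hO.trans inter_subset_right)⟩

lemma exists_isOpen_volume_line_inter_preimage_eq_zero [NormedSpace ℝ E] {V : E → ℝ}
    {L : E →L[ℝ] ℝ} {f k : E}
    (hV : HasStrictFDerivAt V L f) (hk : L k ≠ 0) {U : Set E} (hU : U ∈ 𝓝 f) :
    ∃ O, IsOpen O ∧ f ∈ O ∧ O ⊆ U ∧ ContinuousOn V O ∧
      ∀ N : Set ℝ, volume N = 0 → ∀ x, volume {t : ℝ | x + t • k ∈ O ∩ V ⁻¹' N} = 0 := by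
  obtain ⟨c, hc, hck⟩ : ∃ c : ℝ≥0, 0 < c ∧ c * ‖k‖₊ < ‖L k‖₊ := by
    simpa only [mul_comm] using exists_pos_mul_lt (nnnorm_pos.2 hk) ‖k‖₊
  obtain ⟨O, hO, hfO, hOU, hVO⟩ := exists_isOpen_approximatesLinearOn hV hU hc
  exact ⟨O, hO, hfO, hOU, hVO.continuousOn, fun N hN x ↦
    volume_inter_preimage_eq_zero (antilipschitzWith_line_of_approximatesLinearOn hVO hck x) hN⟩

end Antilipschitz

lemma measurableSet_inter_preimage_of_continuousOn {X Y : Type*} [TopologicalSpace X]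
    [MeasurableSpace X] [OpensMeasurableSpace X] [TopologicalSpace Y] [MeasurableSpace Y]
    [BorelSpace Y] {s : Set X} {t : Set Y} {g : X → Y} (hg : ContinuousOn g s)
    (hs : MeasurableSet s) (ht : MeasurableSet t) : MeasurableSet (s ∩ g ⁻¹' t) := by
  rw [← Subtype.image_preimage_coe]
  exact hs.subtype_image (hg.domRestrict.measurable ht)

section Gaussian

variable {E : Type*} [NormedAddCommGroup E] [NormedSpace ℝ E] [MeasurableSpace E]

lemma measure_setOf_add_smul_mem_eq_zero_of_indepFun [BorelSpace E]
    [SecondCountableTopology E] {Ω : Type*} [MeasurableSpace Ω] {P : Measure Ω} [IsFiniteMeasure P]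
    {X : Ω → E} {Y : Ω → ℝ} (hX : AEMeasurable X P) (hY : AEMeasurable Y P) (hXY : X ⟂ᵢ[P] Y)
    (hac : P.map Y ≪ volume) {k : E} {A : Set E} (hA : MeasurableSet A)
    (hline : ∀ x, volume {t : ℝ | x + t • k ∈ A} = 0) :
    P {ω | X ω + Y ω • k ∈ A} = 0 := by
  have hB : MeasurableSet {p : E × ℝ | p.1 + p.2 • k ∈ A} :=
    measurableSet_preimage (by fun_prop) hA
  have hprod : ((P.map X).prod (P.map Y)) {p : E × ℝ | p.1 + p.2 • k ∈ A} = 0 :=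
    Measure.measure_prod_null_of_ae_null hB (.of_forall fun x ↦ hac (hline x))
  rwa [← (indepFun_iff_map_prod_eq_prod_map_map hX hY).1 hXY,
    Measure.map_apply_of_aemeasurable (hX.prodMk hY) hB] at hprod

/-- The coefficient vector of the linear regression of `x` on `L x` under `μ`, that is, the
Bochner integral `Cov(L x, x) / Var(L x)`. It is the direction along which `x` depends on `L x`.
It is `0` when `Var(L x) = 0` or the integral diverges. -/
noncomputable def regressionVector (μ : Measure E) (L : StrongDual ℝ E) : E :=
  (Var[L; μ])⁻¹ • ∫ x, (L x - μ[L]) • (x - ∫ y, y ∂μ) ∂μ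

variable {μ : Measure E} {L : StrongDual ℝ E}

lemma apply_regressionVector [CompleteSpace E] [IsFiniteMeasure μ] (hμ : MemLp id 2 μ)
    (M : StrongDual ℝ E) : M (regressionVector μ L) = cov[L, M; μ] / Var[L; μ] := by
  have hcentered : MemLp (fun x ↦ x - ∫ y, y ∂μ) 2 μ := hμ.sub (memLp_const _)
  have hLcentered : MemLp (fun x ↦ L x - μ[L]) 2 μ :=
    (hμ.continuousLinearMap_comp L).sub (memLp_const _)
  have hint : Integrable (fun x ↦ (L x - μ[L]) • (x - ∫ y, y ∂μ)) μ :=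
    memLp_one_iff_integrable.1 (hcentered.smul hLcentered)
  rw [regressionVector, map_smul, ← M.integral_comp_comm hint, smul_eq_mul, inv_mul_eq_div,
    covariance]
  simp [M.integral_comp_id_comm (hμ.integrable one_le_two)]

lemma apply_regressionVector_self [CompleteSpace E] [IsFiniteMeasure μ] (hμ : MemLp id 2 μ)
    (hL : Var[L; μ] ≠ 0) : L (regressionVector μ L) = 1 := by
  have hL2 : MemLp L 2 μ := hμ.continuousLinearMap_comp L
  rw [apply_regressionVector hμ, covariance_self hL2.aemeasurable, div_self hL]

lemma covariance_residual_eq_zero [CompleteSpace E] [IsFiniteMeasure μ] (hμ : MemLp id 2 μ)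
    (hL : Var[L; μ] ≠ 0) (M : StrongDual ℝ E) :
    cov[fun x ↦ M (x - L x • regressionVector μ L), L; μ] = 0 := by
  have hM2 : MemLp M 2 μ := hμ.continuousLinearMap_comp M
  have hL2 : MemLp L 2 μ := hμ.continuousLinearMap_comp L
  simp only [map_sub, map_smul, smul_eq_mul]
  rw [covariance_fun_sub_left hM2 (hL2.mul_const _) hL2, covariance_mul_const_left,
    covariance_self hL2.aemeasurable, apply_regressionVector hμ, mul_div_cancel₀ _ hL,
    covariance_comm, sub_self]

lemma indepFun_residual [CompleteSpace E] [BorelSpace E] [SecondCountableTopology E]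
    [IsGaussian μ] (hL : Var[L; μ] ≠ 0) :
    (fun x ↦ x - L x • regressionVector μ L) ⟂ᵢ[μ] L := by
  have hjoint : HasGaussianLaw (fun x ↦ (x - L x • regressionVector μ L, L x)) μ :=
    IsGaussian.hasGaussianLaw_id.map
      ((ContinuousLinearMap.id ℝ E - L.smulRight (regressionVector μ L)).prod L)
  refine hjoint.indepFun_of_covariance_strongDual fun M c ↦ ?_
  have hc : c ∘ L = c 1 • L := by
    ext x
    simpa [mul_comm] using c.map_smul (L x) 1
  rw [hc, covariance_smul_right]
  exact mul_eq_zero_of_right _ (covariance_residual_eq_zero IsGaussian.memLp_two_id hL M)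

lemma map_strongDual_absolutelyContinuous [IsGaussian μ] (hL : Var[L; μ] ≠ 0) :
    μ.map L ≪ volume := by
  rw [IsGaussian.map_eq_gaussianReal L]
  refine gaussianReal_absolutelyContinuous _ fun h ↦ hL ?_
  exact le_antisymm (Real.toNNReal_eq_zero.1 h) (variance_nonneg _ _)

lemma measure_eq_zero_of_volume_line_eq_zero [CompleteSpace E] [BorelSpace E]
    [SecondCountableTopology E] [IsGaussian μ] (hL : Var[L; μ] ≠ 0) {A : Set E}
    (hA : MeasurableSet A)
    (hline : ∀ x, volume {t : ℝ | x + t • regressionVector μ L ∈ A} = 0) : μ A = 0 := by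
  simpa using measure_setOf_add_smul_mem_eq_zero_of_indepFun (by fun_prop) (by fun_prop)
    (indepFun_residual hL) (map_strongDual_absolutelyContinuous hL) hA hline

lemma variance_strongDual_ne_zero [IsFiniteMeasure μ] [μ.IsOpenPosMeasure]
    (hL2 : MemLp L 2 μ) (hL : L ≠ 0) : Var[L; μ] ≠ 0 := by
  intro hvar
  have hae : L =ᵐ[μ] fun _ ↦ μ[L] := by
    rw [← evariance_eq_zero_iff hL2.aemeasurable, ← hL2.ofReal_variance_eq, hvar,
      ENNReal.ofReal_zero]
  have hconst : ⇑L = fun _ ↦ μ[L] := (L.continuous.ae_eq_iff_eq μ continuous_const).1 hae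
  refine hL (ContinuousLinearMap.ext fun x ↦ ?_)
  calc L x
    _ = L 0 := (congr_fun hconst x).trans (congr_fun hconst 0).symm
    _ = 0 := map_zero L

/-- Continuity of `V` on `O` ensures that `Measure.map` does not take its junk value `0` here. -/
theorem stmt0_general [CompleteSpace E] [BorelSpace E] [SecondCountableTopology E] [IsGaussian μ]
    {V : E → ℝ} {f : E} (hV : HasStrictFDerivAt V L f)
    (hL : Var[L; μ] ≠ 0) {U₀ : Set E} (hU₀ : U₀ ∈ 𝓝 f) :
    ∃ O : Set E, IsOpen O ∧ f ∈ O ∧ O ⊆ U₀ ∧ ContinuousOn V O ∧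
      (μ.restrict O).map V ≪ (volume : Measure ℝ) := by
  have hk : L (regressionVector μ L) ≠ 0 := by
    simp [apply_regressionVector_self IsGaussian.memLp_two_id hL]
  obtain ⟨O, hO, hfO, hOU, hVO, hline⟩ :=
    exists_isOpen_volume_line_inter_preimage_eq_zero hV hk hU₀
  refine ⟨O, hO, hfO, hOU, hVO, Measure.AbsolutelyContinuous.mk fun N hNm hN ↦ ?_⟩
  rw [Measure.map_apply_of_aemeasurable (hVO.aemeasurable hO.measurableSet) hNm,
    Measure.restrict_apply' hO.measurableSet, inter_comm]
  exact measure_eq_zero_of_volume_line_eq_zero hL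
    (measurableSet_inter_preimage_of_continuousOn hVO hO.measurableSet hNm) (hline N hN)

end Gaussian

/-- Let `E` be a separable Banach space, `μ` a centered Gaussian probability
measure on `E` with full topological support, and `V : E → ℝ` Borel measurable. If `V` is `C¹`
on an open set `U₀` and its Fréchet derivative at some `f ∈ U₀` is nonzero, then there is an
open neighborhood `O ⊆ U₀` of `f` such that the pushforward under `V` of the restriction of `μ`
to `O` is absolutely continuous with respect to Lebesgue measure. -/
theorem stmt0 {E : Type*} [NormedAddCommGroup E] [NormedSpace ℝ E] [CompleteSpace E]
    [SecondCountableTopology E] [MeasurableSpace E] [BorelSpace E]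
    (μ : Measure E) [IsProbabilityMeasure μ]
    (hGauss : ∀ L : E →L[ℝ] ℝ, ∃ v : NNReal, μ.map L = gaussianReal 0 v)
    (hSupp : ∀ U : Set E, IsOpen U → U.Nonempty → 0 < μ U)
    (V : E → ℝ) (hV : Measurable V)
    (U₀ : Set E) (hU₀ : IsOpen U₀) (hC1 : ContDiffOn ℝ 1 V U₀)
    (f : E) (hf : f ∈ U₀) (hder : fderiv ℝ V f ≠ 0) :
    ∃ O : Set E, IsOpen O ∧ f ∈ O ∧ O ⊆ U₀ ∧
      (μ.restrict O).map V ≪ (volume : Measure ℝ) := by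
  have : IsGaussian μ := isGaussian_of_map_eq_gaussianReal fun L ↦ ⟨0, hGauss L⟩
  have : μ.IsOpenPosMeasure := ⟨fun U hU hne ↦ (hSupp U hU hne).ne'⟩
  have hstrict : HasStrictFDerivAt V (fderiv ℝ V f) f :=
    (hC1.contDiffAt (hU₀.mem_nhds hf)).hasStrictFDerivAt one_ne_zero
  have hvar : Var[fderiv ℝ V f; μ] ≠ 0 :=
    variance_strongDual_ne_zero (IsGaussian.memLp_dual μ _ 2 (by simp)) hder
  obtain ⟨O, hO, hfO, hOU, -, hac⟩ := stmt0_general hstrict hvar (hU₀.mem_nhds hf)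
  exact ⟨O, hO, hfO, hOU, hac⟩
end

section
/- Let E be a separable Banach space, let μ be a centered Gaussian probability measure on E with full topological support, and let V : E → ℝ be Borel measurable. Suppose there is a nonempty connected open subset U ⊆ E on which V is continuously Fréchet differentiable and on which V is not constant. Then the pushforward measure V_*μ on ℝ and the Lebesgue measure on ℝ are not mutually singular. -/
open MeasureTheory ProbabilityTheory

/-!
Suppose `V` maps `μ`-almost every point into a Lebesgue null set `S`, and let `x₀ ∈ U` be a point
where the derivative `l` of `V` is nonzero. Nondegeneracy makes `l` a Gaussian variable of positive
variance, and the covariance of `l` with the identity provides a vector `k` with `l k = 1` such that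
`x - l x • k` is independent of `l`. The conditional law of `μ` along the lines in direction `k` is
thus a nondegenerate Gaussian, so on almost every such line almost every point is mapped into `S`.
A differentiable function of one variable maps null sets to null sets, so the image under `V` of
the part of such a line near `x₀` is an interval of measure zero, and `V` is constant there.
Yet `V` varies along the line through `x₀`, and by continuity along all lines close to it.
-/

open Filter Set
open scoped Topology

section OneVariable

lemma subsingleton_of_isPreconnected_of_volume_eq_zero {s : Set ℝ} (hs : IsPreconnected s)
    (hs0 : volume s = 0) : s.Subsingleton := by
  by_contra hnontriv
  obtain ⟨a, ha, b, hb, hab⟩ := (not_subsingleton_iff.1 hnontriv).exists_lt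
  have hIcc : volume (Icc a b) = 0 := measure_mono_null (hs.Icc_subset ha hb) hs0
  rw [Real.volume_Icc, ENNReal.ofReal_eq_zero, sub_nonpos] at hIcc
  exact hab.not_ge hIcc

lemma eq_of_differentiableOn_of_ae_mem_null {f : ℝ → ℝ} {I S : Set ℝ} (hI : IsPreconnected I)
    (hf : DifferentiableOn ℝ f I) (hS : volume S = 0) (hfS : ∀ᵐ t, t ∈ I → f t ∈ S)
    {s t : ℝ} (hs : s ∈ I) (ht : t ∈ I) : f s = f t := by
  have hexc : volume (f '' {t | ¬(t ∈ I → f t ∈ S)}) = 0 :=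
    addHaar_image_eq_zero_of_differentiableOn_of_addHaar_eq_zero volume
      (hf.mono fun t ht ↦ (Classical.not_imp.1 ht).1) (ae_iff.1 hfS)
  have himage : volume (f '' I) = 0 := by
    refine measure_mono_null ?_ (measure_union_null hS hexc)
    rintro _ ⟨t, ht, rfl⟩
    by_cases hft : f t ∈ S
    · exact Or.inl hft
    · exact Or.inr (mem_image_of_mem f fun h ↦ hft (h ht))
  exact subsingleton_of_isPreconnected_of_volume_eq_zero (hI.image f hf.continuousOn) himage
    (mem_image_of_mem f hs) (mem_image_of_mem f ht)

end OneVariable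

section Lines

variable {E : Type*} [NormedAddCommGroup E] [NormedSpace ℝ E] {V : E → ℝ} {k : E}

lemma apply_add_smul_eq_of_ae_mem_null {B : Set E} {S : Set ℝ} (hB : Convex ℝ B)
    (hV : DifferentiableOn ℝ V B) (hS : volume S = 0) {x : E} {t : ℝ} (hx : x ∈ B)
    (hxt : x + t • k ∈ B) (hVS : ∀ᵐ s : ℝ, V (x + s • k) ∈ S) : V (x + t • k) = V x := by
  have hI : Convex ℝ ((fun s : ℝ ↦ x + s • k) ⁻¹' B) :=
    (hB.translate_preimage_right x).linear_preimage (LinearMap.toSpanSingleton ℝ E k)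
  have hline : DifferentiableOn ℝ (fun s : ℝ ↦ V (x + s • k)) ((fun s : ℝ ↦ x + s • k) ⁻¹' B) :=
    hV.comp (by fun_prop) (mapsTo_preimage _ _)
  simpa using eq_of_differentiableOn_of_ae_mem_null hI.isPreconnected hline hS
    (hVS.mono fun s hs _ ↦ hs) (s := t) (t := 0) hxt (by simpa using hx)

lemma exists_eventually_add_smul_ne {U : Set E} (hU : IsOpen U) (hV : ContinuousOn V U) {x₀ : E}
    (hx₀ : x₀ ∈ U) {c : ℝ} (hderiv : HasLineDerivAt ℝ V c x₀ k) (hc : c ≠ 0) :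
    ∃ t : ℝ, ∀ᶠ x in 𝓝 x₀, x ∈ U ∧ x + t • k ∈ U ∧ V (x + t • k) ≠ V x := by
  obtain ⟨t, htU, htV⟩ : ∃ t : ℝ, x₀ + t • k ∈ U ∧ V (x₀ + t • k) ≠ V x₀ := by
    have hline : ContinuousAt (fun t : ℝ ↦ x₀ + t • k) 0 := by fun_prop
    have hmem : ∀ᶠ t : ℝ in 𝓝 0, x₀ + t • k ∈ U :=
      hline.eventually_mem (hU.mem_nhds (by simpa using hx₀))
    exact ((hmem.filter_mono nhdsWithin_le_nhds).and (hderiv.eventually_ne hc)).exists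
  have hshift : ContinuousAt (fun x ↦ x + t • k) x₀ := by fun_prop
  have hVshift : ContinuousAt (fun x ↦ V (x + t • k)) x₀ :=
    ContinuousAt.comp' (hV.continuousAt (hU.mem_nhds htU)) hshift
  exact ⟨t, (hU.eventually_mem hx₀).and ((hshift.eventually_mem (hU.mem_nhds htU)).and
    ((hVshift.ne_iff_eventually_ne (hV.continuousAt (hU.mem_nhds hx₀))).1 htV))⟩

variable [MeasurableSpace E] {μ : Measure E}

/-- `hk` encodes that a `μ`-null set meets almost every line in direction `k` in a Lebesgue null
set. -/
lemma not_mutuallySingular_map_of_fderiv_ne_zero [μ.IsOpenPosMeasure] (hV : AEMeasurable V μ)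
    (hk : Measure.QuasiMeasurePreserving (fun p : E × ℝ ↦ p.1 + p.2 • k) (μ.prod volume) μ)
    {x₀ : E} (hdiff : ∀ᶠ x in 𝓝 x₀, DifferentiableAt ℝ V x) (hne : fderiv ℝ V x₀ k ≠ 0) :
    ¬ (μ.map V).MutuallySingular volume := by
  rintro ⟨S, -, hμS, hS0⟩
  have hVS : ∀ᵐ x ∂μ, V x ∈ Sᶜ := ae_of_ae_map hV (measure_eq_zero_iff_ae_notMem.1 hμS)
  have hlines : ∀ᵐ x ∂μ, ∀ᵐ t : ℝ, V (x + t • k) ∈ Sᶜ := Measure.ae_ae_of_ae_prod (hk.ae hVS)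
  obtain ⟨r, hr, hball⟩ := Metric.eventually_nhds_iff_ball.1 hdiff
  have hx₀ : x₀ ∈ Metric.ball x₀ r := Metric.mem_ball_self hr
  have hdiffOn : DifferentiableOn ℝ V (Metric.ball x₀ r) :=
    fun x hx ↦ (hball x hx).differentiableWithinAt
  obtain ⟨t, hnear⟩ := exists_eventually_add_smul_ne Metric.isOpen_ball hdiffOn.continuousOn hx₀
    ((hball x₀ hx₀).hasFDerivAt.hasLineDerivAt k) hne
  obtain ⟨x, hxS, hx, hxt, hVx⟩ :=
    ((mem_closure_iff_frequently.1 (Measure.dense_of_ae hlines x₀)).and_eventually hnear).exists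
  exact hVx (apply_add_smul_eq_of_ae_mem_null (convex_ball x₀ r) hdiffOn hS0 hx hxt hxS)

lemma quasiMeasurePreserving_add_smul_of_indepFun [BorelSpace E] [SecondCountableTopology E]
    [IsFiniteMeasure μ] {X : E → ℝ} (hX : Measurable X)
    (hindep : IndepFun (fun x ↦ x - X x • k) X μ) (hac : volume ≪ μ.map X) :
    Measure.QuasiMeasurePreserving (fun p : E × ℝ ↦ p.1 + p.2 • k) (μ.prod volume) μ := by
  have hY : Measurable fun x ↦ x - X x • k := by fun_prop
  have hshear : MeasurePreserving (fun p : E × ℝ ↦ (p.1 - X p.1 • k, X p.1 + p.2))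
      (μ.prod volume) ((μ.map fun x ↦ x - X x • k).prod volume) :=
    hY.measurePreserving μ |>.skew_product (g := fun x t ↦ X x + t) (by fun_prop)
      (ae_of_all _ fun x ↦ map_add_left_eq_self volume (X x))
  have hrecombine : MeasurePreserving (fun q : E × ℝ ↦ q.1 + q.2 • k)
      ((μ.map fun x ↦ x - X x • k).prod (μ.map X)) μ := by
    refine ⟨by fun_prop, ?_⟩
    rw [← (indepFun_iff_map_prod_eq_prod_map_map hY.aemeasurable hX.aemeasurable).1 hindep,
      Measure.map_map (by fun_prop) (by fun_prop)]
    simp [Function.comp_def]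
  have hquasi := (hrecombine.quasiMeasurePreserving.mono_left
    (Measure.AbsolutelyContinuous.rfl.prod hac)).comp hshear.quasiMeasurePreserving
  convert hquasi using 2 with p
  simp only [Function.comp_apply]
  module

end Lines

section Covariance

variable {E : Type*} [NormedAddCommGroup E] [NormedSpace ℝ E]

lemma apply_integral_smul_sub_eq_covariance [CompleteSpace E] {Ω : Type*} [MeasurableSpace Ω]
    {P : Measure Ω} [IsFiniteMeasure P] {X : Ω → ℝ} {Y : Ω → E} (hX : MemLp X 2 P)
    (hY : MemLp Y 2 P) (L : E →L[ℝ] ℝ) :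
    L (∫ ω, (X ω - P[X]) • (Y ω - P[Y]) ∂P) = cov[X, fun ω ↦ L (Y ω); P] := by
  have hint : Integrable (fun ω ↦ (X ω - P[X]) • (Y ω - P[Y])) P :=
    memLp_one_iff_integrable.1 ((hY.sub (memLp_const _)).smul (hX.sub (memLp_const _)))
  rw [← L.integral_comp_comm hint, covariance, L.integral_comp_comm (hY.integrable one_le_two)]
  simp only [map_smul, map_sub, smul_eq_mul]

lemma variance_ne_zero_of_ne_zero [MeasurableSpace E] {μ : Measure E} [IsFiniteMeasure μ]
    [μ.IsOpenPosMeasure] {l : E →L[ℝ] ℝ} (hl2 : MemLp l 2 μ) (hl : l ≠ 0) : Var[l; μ] ≠ 0 := by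
  intro hvar
  have hae : l =ᵐ[μ] fun _ ↦ μ[l] := ae_eq_integral_of_variance_eq_zero hl2 hvar
  have hconst : ⇑l = fun _ ↦ μ[l] :=
    Measure.eq_of_ae_eq hae l.continuous continuous_const
  refine hl (ContinuousLinearMap.ext fun x ↦ ?_)
  rw [congr_fun hconst x, ← congr_fun hconst 0, map_zero, zero_apply]

end Covariance

section Gaussian

variable {E : Type*} [NormedAddCommGroup E] [NormedSpace ℝ E] [CompleteSpace E]
  [SecondCountableTopology E] [MeasurableSpace E] [BorelSpace E] {μ : Measure E} [IsGaussian μ]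
  {l : E →L[ℝ] ℝ}

lemma indepFun_sub_smul_of_covariance_eq {k : E}
    (hk : ∀ L : E →L[ℝ] ℝ, cov[l, L; μ] = Var[l; μ] * L k) :
    IndepFun (fun x ↦ x - l x • k) l μ := by
  have hjoint : HasGaussianLaw (fun x ↦ (x - l x • k, l x)) μ :=
    ⟨inferInstanceAs (IsGaussian (μ.map ((ContinuousLinearMap.id ℝ E - l.smulRight k).prod l)))⟩
  have hmem (L : E →L[ℝ] ℝ) : MemLp L 2 μ := IsGaussian.memLp_dual μ L 2 (by simp)
  refine hjoint.indepFun_of_covariance_strongDual fun L M ↦ ?_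
  have hL : (L ∘ fun x ↦ x - l x • k) = ⇑L - L k • ⇑l := by
    ext x
    simp [mul_comm]
  have hM : M ∘ l = M 1 • ⇑l := by
    ext x
    simpa [mul_comm] using map_smul M (l x) 1
  rw [hL, hM, covariance_smul_right, covariance_sub_left (hmem L) ((hmem l).const_smul _) (hmem l),
    covariance_smul_left, covariance_self l.continuous.aemeasurable, covariance_comm, hk]
  ring

lemma exists_quasiMeasurePreserving_add_smul (hl : Var[l; μ] ≠ 0) :
    ∃ k : E, l k = 1 ∧
      Measure.QuasiMeasurePreserving (fun p : E × ℝ ↦ p.1 + p.2 • k) (μ.prod volume) μ := by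
  let k : E := Var[l; μ]⁻¹ • ∫ x, (l x - μ[l]) • (x - ∫ y, y ∂μ) ∂μ
  have hk (L : E →L[ℝ] ℝ) : cov[l, L; μ] = Var[l; μ] * L k := by
    rw [map_smul, smul_eq_mul, mul_inv_cancel_left₀ hl]
    exact (apply_integral_smul_sub_eq_covariance (IsGaussian.memLp_dual μ l 2 (by simp))
      IsGaussian.memLp_two_id L).symm
  have hac : volume ≪ μ.map l := by
    rw [IsGaussian.map_eq_gaussianReal]
    refine gaussianReal_absolutelyContinuous' _ ?_
    rw [Ne, Real.toNNReal_eq_zero, not_le]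
    exact (variance_nonneg l μ).lt_of_ne' hl
  refine ⟨k, ?_, quasiMeasurePreserving_add_smul_of_indepFun l.measurable
    (indepFun_sub_smul_of_covariance_eq hk) hac⟩
  have hself := hk l
  rw [covariance_self l.continuous.aemeasurable] at hself
  exact (mul_eq_left₀ hl).1 hself.symm

end Gaussian

theorem stmt1_general {E : Type*} [NormedAddCommGroup E] [NormedSpace ℝ E] [CompleteSpace E]
    [SecondCountableTopology E] [MeasurableSpace E] [BorelSpace E]
    (μ : Measure E) [IsGaussian μ] [μ.IsOpenPosMeasure] {V : E → ℝ} (hV : AEMeasurable V μ)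
    {U : Set E} (hU : IsOpen U) (hUconn : IsPreconnected U) (hdiff : DifferentiableOn ℝ V U)
    (hnc : ∃ x ∈ U, ∃ y ∈ U, V x ≠ V y) :
    ¬ (μ.map V).MutuallySingular volume := by
  obtain ⟨x₀, hx₀, hne⟩ : ∃ x ∈ U, fderiv ℝ V x ≠ 0 := by
    by_contra! hzero
    obtain ⟨x, hx, y, hy, hxy⟩ := hnc
    exact hxy (hU.is_const_of_fderiv_eq_zero hUconn hdiff hzero hx hy)
  have hvar : Var[fderiv ℝ V x₀; μ] ≠ 0 :=
    variance_ne_zero_of_ne_zero (IsGaussian.memLp_dual μ _ 2 (by simp)) hne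
  obtain ⟨k, hk, hquasi⟩ := exists_quasiMeasurePreserving_add_smul hvar
  have hnear : ∀ᶠ x in 𝓝 x₀, DifferentiableAt ℝ V x :=
    hdiff.eventually_differentiableAt (hU.mem_nhds hx₀)
  exact not_mutuallySingular_map_of_fderiv_ne_zero hV hquasi hnear (hk ▸ one_ne_zero)

/-- Let `E` be a separable Banach space, `μ` a centered Gaussian probability
measure on `E` with full topological support, and `V : E → ℝ` Borel measurable. If `V` is
continuously Fréchet differentiable and non-constant on some nonempty connected open
`U ⊆ E`, then the pushforward `V_*μ` and Lebesgue measure are not mutually singular. -/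
theorem stmt1 {E : Type*} [NormedAddCommGroup E] [NormedSpace ℝ E] [CompleteSpace E]
    [SecondCountableTopology E] [MeasurableSpace E] [BorelSpace E]
    (μ : Measure E) [IsProbabilityMeasure μ]
    (hGauss : ∀ L : E →L[ℝ] ℝ, ∃ v : NNReal, μ.map L = gaussianReal 0 v)
    (hSupp : ∀ U : Set E, IsOpen U → U.Nonempty → 0 < μ U)
    (V : E → ℝ) (hV : Measurable V)
    (U : Set E) (hU : IsOpen U) (hUconn : IsConnected U)
    (hC1 : ContDiffOn ℝ 1 V U)
    (hnc : ∃ x ∈ U, ∃ y ∈ U, V x ≠ V y) :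
    ¬ (μ.map V).MutuallySingular (volume : Measure ℝ) := by
  have : IsGaussian μ := isGaussian_of_map_eq_gaussianReal fun L ↦ ⟨0, hGauss L⟩
  have : μ.IsOpenPosMeasure := ⟨fun W hW hne ↦ (hSupp W hW hne).ne'⟩
  exact stmt1_general μ hV.aemeasurable hU hUconn.isPreconnected
    (hC1.differentiableOn one_ne_zero) hnc
end

section
/- Let m ≥ 2 and let f, h : ℝ^m → ℝ be of class C². Assume Z := f⁻¹(0) is compact and ∇f(x) ≠ 0 for every x ∈ Z. Then there exist ε > 0 and a bounded open set U ⊆ ℝ^m with Z ⊆ U such that the function φ(t) := ℋ^{m−1}({x ∈ U : f(x) + t·h(x) = 0}), defined for |t| < ε, is finite and has derivative at t = 0 equal to ∫_Z h(x)·(Hess_x f(ν(x),ν(x)) − Δf(x))/‖∇f(x)‖² dℋ^{m−1}(x), where ν(x) = ∇f(x)/‖∇f(x)‖. -/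
open MeasureTheory

/-- The Hessian bilinear form of `f : ℝ^m → ℝ` at `x`, evaluated at `(v, w)`. -/
noncomputable def hessianApply {m : ℕ} (f : EuclideanSpace ℝ (Fin m) → ℝ)
    (x v w : EuclideanSpace ℝ (Fin m)) : ℝ :=
  fderiv ℝ (fun y => fderiv ℝ f y) x v w

/-- The Laplacian of `f : ℝ^m → ℝ` at `x`, i.e. the trace of the Hessian. -/
noncomputable def laplacianApply {m : ℕ} (f : EuclideanSpace ℝ (Fin m) → ℝ)
    (x : EuclideanSpace ℝ (Fin m)) : ℝ :=
  ∑ i : Fin m, hessianApply f x (EuclideanSpace.single i 1) (EuclideanSpace.single i 1)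

open Set Filter Topology Asymptotics Module
open scoped ENNReal NNReal RealInnerProductSpace Laplacian

/-!
For small `t` the level set of `f + t * h` is a normal graph over `Z`: the implicit
function theorem gives `s` with `f + t * h` at `x + s (t, x) • ∇f x` equal to `f x`, and
the inverse function theorem near the compact set `{0} × Z` shows that
`x ↦ x + s (t, x) • ∇f x` maps `Z` bijectively onto the part of the level set in a fixed
neighbourhood. By the area formula, the measure of the level set is the integral over `Z` of
`det (1 + s • H) * sec θ`, where `H` is the derivative of `∇f` precomposed with the projection to
the tangent space and `θ` is the angle between the normals before and after the shift. Since
`sec θ = 1 + O(t²)`, only the determinant contributes to the derivative at `t = 0`, namely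
`∂ₜs * tr H` with `∂ₜs = -h / ‖∇f‖²` and `tr H = Δf - Hess f (ν, ν)`.
-/

/-! ### The area formula -/

section HausdorffMeasure

theorem hausdorffMeasure_image_le_mul_hausdorffMeasure_image {ι X Y : Type*}
    [EMetricSpace X] [MeasurableSpace X] [BorelSpace X]
    [EMetricSpace Y] [MeasurableSpace Y] [BorelSpace Y]
    {a : ι → X} {b : ι → Y} {S : Set ι} {K : ℝ≥0} {d : ℝ} (hd : 0 ≤ d)
    (h : ∀ x ∈ S, ∀ y ∈ S, edist (a x) (a y) ≤ K * edist (b x) (b y)) :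
    μH[d] (a '' S) ≤ (K : ℝ≥0∞) ^ d * μH[d] (b '' S) := by
  rcases S.eq_empty_or_nonempty with rfl | ⟨x₀, -⟩
  · simp
  have : Nonempty ι := ⟨x₀⟩
  set g := Function.invFunOn b S
  have g_mem : ∀ z ∈ b '' S, g z ∈ S := fun z hz => Function.invFunOn_mem hz
  have b_g : ∀ z ∈ b '' S, b (g z) = z := fun z hz => Function.invFunOn_eq hz
  have lipschitz : LipschitzOnWith K (a ∘ g) (b '' S) := fun u hu v hv => by
    simpa only [Function.comp, b_g u hu, b_g v hv] using h _ (g_mem u hu) _ (g_mem v hv)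
  have image_eq : a '' S = (a ∘ g) '' (b '' S) := by
    rw [image_image]
    refine image_congr fun x hx => ?_
    have hbx := mem_image_of_mem b hx
    have := h x hx _ (g_mem _ hbx)
    rwa [b_g _ hbx, edist_self, mul_zero, nonpos_iff_eq_zero, edist_eq_zero] at this
  rw [image_eq]
  exact lipschitz.hausdorffMeasure_image_le hd

end HausdorffMeasure

section Asymptotics

variable {α E : Type*} [NormedAddCommGroup E] {l : Filter α} {u v : α → E} {ρ : ℝ≥0}

theorem eventually_enorm_le_mul_of_isEquivalent (h : u ~[l] v) (hρ : 1 < ρ) :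
    ∀ᶠ x in l, ‖u x‖ₑ ≤ ρ * ‖v x‖ₑ := by
  have hρ' : (0 : ℝ) < ρ - 1 := sub_pos.2 hρ
  filter_upwards [h.isLittleO.bound hρ'] with x hx
  suffices ‖u x‖₊ ≤ ρ * ‖v x‖₊ by
    simpa only [enorm_eq_nnnorm, ← ENNReal.coe_mul, ENNReal.coe_le_coe] using this
  rw [← NNReal.coe_le_coe]
  push_cast
  linarith [norm_sub_norm_le (u x) (v x), show ‖u x - v x‖ ≤ (ρ - 1) * ‖v x‖ from hx]

end Asymptotics

section LocalArea

variable {E : Type*} [NormedAddCommGroup E] [InnerProductSpace ℝ E]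

/-- `P` is the tangent space of `Z` at `x₀` in the strict sense: chords of `Z` with both endpoints
near `x₀` agree with their projections to `P` up to a relatively small error. -/
def IsStrictTangentAt (P : Submodule ℝ E) [P.HasOrthogonalProjection] (Z : Set E) (x₀ : E) : Prop :=
  (fun q : E × E => P.starProjection (q.1 - q.2)) ~[𝓝[Z ×ˢ Z] (x₀, x₀)] fun q => q.1 - q.2

/-- `Φ` multiplies the measure of small pieces of `Z` near `x₀` by approximately `J`; the second
inequality is free of division so as to make sense also for pieces of infinite measure. -/
def ScalesMeasureAt {X : Type*} [TopologicalSpace X] [MeasurableSpace X] (μ : Measure X)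
    (Φ : X → X) (Z : Set X) (J : ℝ≥0) (x₀ : X) : Prop :=
  ∀ κ : ℝ≥0, 1 < κ → ∃ V ∈ 𝓝 x₀, ∀ S ⊆ Z ∩ V,
    μ (Φ '' S) ≤ κ * (J * μ S) ∧ J * μ S ≤ κ * μ (Φ '' S)

theorem exists_mem_nhds_of_eventually_nhdsWithin_prod {X : Type*} [TopologicalSpace X]
    {Z : Set X} {x₀ : X} {p : X × X → Prop} (h : ∀ᶠ q in 𝓝[Z ×ˢ Z] (x₀, x₀), p q) :
    ∃ V ∈ 𝓝 x₀, ∀ S ⊆ Z ∩ V, ∀ x ∈ S, ∀ y ∈ S, p (x, y) := by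
  rw [nhdsWithin_prod_eq, eventually_prod_self_iff'] at h
  obtain ⟨T, hT, hp⟩ := h
  obtain ⟨V, hV, hVT⟩ := mem_nhdsWithin_iff_exists_mem_nhds_inter.1 hT
  exact ⟨V, hV, fun S hS x hx y hy =>
    hp x (hVT ⟨(hS hx).2, (hS hx).1⟩) y (hVT ⟨(hS hy).2, (hS hy).1⟩)⟩

theorem exists_one_lt_pow_lt {κ : ℝ≥0} (hκ : 1 < κ) (n : ℕ) : ∃ ρ : ℝ≥0, 1 < ρ ∧ ρ ^ n < κ := by
  have lim : Tendsto (fun ρ : ℝ≥0 => ρ ^ n) (𝓝[>] 1) (𝓝 1) := by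
    simpa using ((continuous_pow n).tendsto (1 : ℝ≥0)).mono_left nhdsWithin_le_nhds
  obtain ⟨ρ, hρκ, hρ⟩ := ((lim.eventually (gt_mem_nhds hκ)).and self_mem_nhdsWithin).exists
  exact ⟨ρ, hρ, hρκ⟩

theorem isStrictTangentAt_preimage_singleton [CompleteSpace E] {f : E → ℝ} {x₀ : E}
    (hf : HasStrictFDerivAt f (fderiv ℝ f x₀) x₀) (c : ℝ) :
    IsStrictTangentAt (ℝ ∙ gradient f x₀)ᗮ (f ⁻¹' {c}) x₀ := by
  have inner_isLittleO : (fun q : E × E => ⟪gradient f x₀, q.1 - q.2⟫)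
      =o[𝓝[(f ⁻¹' {c}) ×ˢ (f ⁻¹' {c})] (x₀, x₀)] fun q => q.1 - q.2 := by
    refine (hf.isLittleO.mono nhdsWithin_le_nhds).neg_left.congr' ?_ .rfl
    filter_upwards [self_mem_nhdsWithin] with q hq
    simp only [mem_prod, mem_preimage, mem_singleton_iff] at hq
    simp [gradient, hq]
  have proj_isLittleO : (fun q : E × E => (ℝ ∙ gradient f x₀).starProjection (q.1 - q.2))
      =o[𝓝[(f ⁻¹' {c}) ×ˢ (f ⁻¹' {c})] (x₀, x₀)] fun q => q.1 - q.2 := by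
    refine IsBigO.trans_isLittleO (.of_bound ((‖gradient f x₀‖ ^ 2)⁻¹ * ‖gradient f x₀‖) ?_)
      inner_isLittleO
    refine .of_forall fun q => le_of_eq ?_
    simp [Submodule.starProjection_singleton, norm_smul]
    ring
  refine proj_isLittleO.neg_left.congr_left fun q => ?_
  simp [Submodule.starProjection_orthogonal_val]

variable [FiniteDimensional ℝ E] {Z : Set E} {x₀ : E} {P : Submodule ℝ E} {Φ : E → E}
  {A : E →L[ℝ] E}

theorem IsStrictTangentAt.image_sub_isEquivalent (hZ : IsStrictTangentAt P Z x₀)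
    (hΦ : HasStrictFDerivAt Φ A x₀) (hA : InjOn A P) :
    (fun q : E × E => Φ q.1 - Φ q.2) ~[𝓝[Z ×ˢ Z] (x₀, x₀)]
      fun q => A (P.starProjection (q.1 - q.2)) := by
  obtain ⟨K, -, hK⟩ := (A.comp P.subtypeL : P →ₗ[ℝ] E).exists_antilipschitzWith
    (LinearMap.ker_eq_bot.2 fun v w h => Subtype.ext (hA v.2 w.2 h))
  have proj_isBigO : (fun q : E × E => P.starProjection (q.1 - q.2))
      =O[𝓝[Z ×ˢ Z] (x₀, x₀)] fun q => A (P.starProjection (q.1 - q.2)) :=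
    .of_bound K (.of_forall fun q => by
      simpa using hK.le_mul_dist (P.orthogonalProjectionOnto (q.1 - q.2)) 0)
  have chord_isBigO := hZ.symm.isBigO.trans proj_isBigO
  have normal_isLittleO := (A.isBigO_comp _ _).trans_isLittleO hZ.symm.isLittleO
  refine (((hΦ.isLittleO.mono nhdsWithin_le_nhds).trans_isBigO chord_isBigO).add
    (normal_isLittleO.trans_isBigO proj_isBigO)).congr_left fun q => ?_
  simp

variable [MeasurableSpace E] [BorelSpace E]

theorem IsStrictTangentAt.exists_hausdorffMeasure_bounds (hZ : IsStrictTangentAt P Z x₀)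
    (hΦ : HasStrictFDerivAt Φ A x₀) (hA : InjOn A P) {ρ : ℝ≥0} (hρ : 1 < ρ) {d : ℝ} (hd : 0 ≤ d) :
    ∃ V ∈ 𝓝 x₀, ∀ S ⊆ Z ∩ V,
      μH[d] S ≤ ρ ^ d * μH[d] (P.orthogonalProjectionOnto '' S) ∧
      μH[d] (Φ '' S) ≤ ρ ^ d * μH[d] ((A ∘ P.starProjection) '' S) ∧
      μH[d] ((A ∘ P.starProjection) '' S) ≤ ρ ^ d * μH[d] (Φ '' S) := by
  have image_equiv := hZ.image_sub_isEquivalent hΦ hA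
  obtain ⟨V, hV, bounds⟩ := exists_mem_nhds_of_eventually_nhdsWithin_prod
    ((eventually_enorm_le_mul_of_isEquivalent hZ.symm hρ).and
      ((eventually_enorm_le_mul_of_isEquivalent image_equiv hρ).and
        (eventually_enorm_le_mul_of_isEquivalent image_equiv.symm hρ)))
  have enorm_proj : ∀ v : E, ‖P.starProjection v‖ₑ = ‖P.orthogonalProjectionOnto v‖ₑ := fun _ => rfl
  simp only [enorm_proj] at bounds
  simp only [map_sub, ← edist_eq_enorm_sub] at bounds
  refine ⟨V, hV, fun S hS => ⟨?_, ?_, ?_⟩⟩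
  · simpa only [image_id] using hausdorffMeasure_image_le_mul_hausdorffMeasure_image (a := id) hd
      fun x hx y hy => (bounds S hS x hx y hy).1
  · exact hausdorffMeasure_image_le_mul_hausdorffMeasure_image hd
      fun x hx y hy => (bounds S hS x hx y hy).2.1
  · exact hausdorffMeasure_image_le_mul_hausdorffMeasure_image hd
      fun x hx y hy => (bounds S hS x hx y hy).2.2

theorem IsStrictTangentAt.exists_hausdorffMeasure_lt_top (hZ : IsStrictTangentAt P Z x₀) :
    ∃ V ∈ 𝓝[Z] x₀, μH[(finrank ℝ P : ℝ)] V < ∞ := by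
  obtain ⟨V, hV, bounds⟩ := hZ.exists_hausdorffMeasure_bounds (hasStrictFDerivAt_id x₀)
    (injOn_id _) one_lt_two (Nat.cast_nonneg (finrank ℝ P))
  refine ⟨Z ∩ (V ∩ Metric.ball x₀ 1), inter_mem_nhdsWithin _ (inter_mem hV
    (Metric.ball_mem_nhds _ one_pos)), ?_⟩
  refine (bounds _ (inter_subset_inter_right _ inter_subset_left)).1.trans_lt
    (ENNReal.mul_lt_top (by finiteness) ?_)
  exact (P.lipschitzWith_orthogonalProjectionOnto.isBounded_image (Metric.isBounded_ball.subset
    (inter_subset_right.trans inter_subset_right))).measure_lt_top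

theorem hausdorffMeasure_image_comp_starProjection (A : E →L[ℝ] E) (S : Set E) :
    μH[(finrank ℝ P : ℝ)] ((A ∘ P.starProjection) '' S) =
      ENNReal.ofReal ((A : E →ₗ[ℝ] E).domRestrict P).normDet *
        μH[(finrank ℝ P : ℝ)] (P.orthogonalProjectionOnto '' S) := by
  rw [← LinearMap.hausdorffMeasure_image, ← image_comp]
  rfl

theorem IsStrictTangentAt.scalesMeasureAt (hZ : IsStrictTangentAt P Z x₀)
    (hΦ : HasStrictFDerivAt Φ A x₀) (hA : InjOn A P) :
    ScalesMeasureAt μH[(finrank ℝ P : ℝ)] Φ Z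
      ((A : E →ₗ[ℝ] E).domRestrict P).normDet.toNNReal x₀ := by
  intro κ hκ
  obtain ⟨ρ, hρ, hρκ⟩ := exists_one_lt_pow_lt hκ (2 * finrank ℝ P)
  obtain ⟨V, hV, bounds⟩ := hZ.exists_hausdorffMeasure_bounds hΦ hA hρ
    (Nat.cast_nonneg (finrank ℝ P))
  refine ⟨V, hV, fun S hS => ?_⟩
  obtain ⟨le_proj, image_le, le_image⟩ := bounds S hS
  have proj_le := hausdorffMeasure_orthogonalProjectionOnto_le P (finrank ℝ P : ℝ) S (by positivity)
  rw [hausdorffMeasure_image_comp_starProjection, ENNReal.ofReal] at image_le le_image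
  have hρd : (ρ : ℝ≥0∞) ^ (finrank ℝ P : ℝ) * ρ ^ (finrank ℝ P : ℝ) ≤ κ := by
    rw [ENNReal.rpow_natCast, ← pow_add, ← two_mul]
    exact_mod_cast hρκ.le
  set d : ℝ := ((finrank ℝ P : ℕ) : ℝ)
  set p := P.orthogonalProjectionOnto
  set J := ((A : E →ₗ[ℝ] E).domRestrict P).normDet.toNNReal
  constructor
  · have one_le : (1 : ℝ≥0∞) ≤ ρ ^ d := by
      rw [← ENNReal.one_rpow d]
      gcongr
      exact_mod_cast hρ.le
    calc μH[d] (Φ '' S) ≤ ρ ^ d * (J * μH[d] (p '' S)) := image_le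
      _ ≤ κ * (J * μH[d] S) := by
        gcongr
        exact (le_mul_of_one_le_left' one_le).trans hρd
  · calc J * μH[d] S
        ≤ J * (ρ ^ d * μH[d] (p '' S)) := by gcongr
      _ = ρ ^ d * (J * μH[d] (p '' S)) := by ring
      _ ≤ ρ ^ d * (ρ ^ d * μH[d] (Φ '' S)) := by gcongr
      _ ≤ κ * μH[d] (Φ '' S) := by rw [← mul_assoc]; gcongr

end LocalArea

section AreaFormula

theorem measure_le_of_forall_exists_nhds {X : Type*} [TopologicalSpace X]
    [SecondCountableTopology X] [MeasurableSpace X] [OpensMeasurableSpace X] {ν₁ ν₂ : Measure X}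
    (h : ∀ x, ∃ V ∈ 𝓝 x, ∀ S ⊆ V, MeasurableSet S → ν₁ S ≤ ν₂ S) : ν₁ ≤ ν₂ := by
  choose V hV hle using h
  obtain ⟨c, hc, hcover⟩ := TopologicalSpace.countable_cover_nhds
    fun x => interior_mem_nhds.2 (hV x)
  rcases c.eq_empty_or_nonempty with rfl | hne
  · have : IsEmpty X := univ_eq_empty_iff.1 (by simpa using hcover.symm)
    exact (Subsingleton.elim ν₁ ν₂).le
  obtain ⟨x, rfl⟩ := hc.exists_eq_range hne
  rw [biUnion_range] at hcover
  refine Measure.le_iff.2 fun S hS => ?_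
  have T_meas : ∀ n, MeasurableSet (disjointed (fun n => interior (V (x n))) n) :=
    .disjointed fun n => isOpen_interior.measurableSet
  have S_eq : S = ⋃ n, S ∩ disjointed (fun n => interior (V (x n))) n := by
    rw [← inter_iUnion, iUnion_disjointed, hcover, inter_univ]
  calc ν₁ S ≤ ∑' n, ν₁ (S ∩ disjointed (fun n => interior (V (x n))) n) := by
        conv_lhs => rw [S_eq]
        exact measure_iUnion_le _
    _ ≤ ∑' n, ν₂ (S ∩ disjointed (fun n => interior (V (x n))) n) := by
        refine ENNReal.tsum_le_tsum fun n => ?_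
        exact hle (x n) _ (inter_subset_right.trans
          ((disjointed_subset _ n).trans interior_subset)) (hS.inter (T_meas n))
    _ = ν₂ S := by
        rw [← measure_iUnion _ fun n => hS.inter (T_meas n), ← S_eq]
        exact fun i j hij => (disjoint_disjointed _ hij).mono inter_subset_right inter_subset_right

theorem le_of_forall_one_lt_le_coe_mul {a b : ℝ≥0∞} (h : ∀ κ : ℝ≥0, 1 < κ → a ≤ κ * b) :
    a ≤ b := by
  have lim : Tendsto (fun κ : ℝ≥0 => (κ : ℝ≥0∞) * b) (𝓝[>] 1) (𝓝 b) := by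
    simpa using ENNReal.Tendsto.mul_const (b := b)
      ((ENNReal.continuous_coe.tendsto (1 : ℝ≥0)).mono_left nhdsWithin_le_nhds) (by simp)
  exact ge_of_tendsto lim (eventually_mem_nhdsWithin.mono h)

variable {X : Type*} [TopologicalSpace X] [MeasurableSpace X] {μ : Measure X}
  {Φ : X → X} {Z : Set X} {J : X → ℝ≥0}

theorem ScalesMeasureAt.exists_lintegral_bounds {x₀ : X} (h : ScalesMeasureAt μ Φ Z (J x₀) x₀)
    (hJ : ContinuousWithinAt J Z x₀) (hJ₀ : J x₀ ≠ 0) {κ : ℝ≥0} (hκ : 1 < κ) :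
    ∃ V ∈ 𝓝 x₀, ∀ S ⊆ Z ∩ V, MeasurableSet S →
      μ (Φ '' S) ≤ κ * ∫⁻ x in S, J x ∂μ ∧ ∫⁻ x in S, J x ∂μ ≤ κ * μ (Φ '' S) := by
  obtain ⟨ρ, hρ, hρκ⟩ := exists_one_lt_pow_lt hκ 2
  obtain ⟨V, hV, hVS⟩ := h ρ hρ
  have J_near : ∀ᶠ x in 𝓝[Z] x₀, J x ≤ ρ * J x₀ ∧ J x₀ ≤ ρ * J x :=
    (hJ.eventually_le_const (lt_mul_of_one_lt_left (pos_iff_ne_zero.2 hJ₀) hρ)).and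
      ((hJ.const_mul ρ).eventually_const_le (lt_mul_of_one_lt_left (pos_iff_ne_zero.2 hJ₀) hρ))
  obtain ⟨V', hV', hJV'⟩ := mem_nhdsWithin_iff_exists_mem_nhds_inter.1 J_near
  refine ⟨V ∩ V', inter_mem hV hV', fun S hS S_meas => ?_⟩
  have J_bounds : ∀ x ∈ S, J x ≤ ρ * J x₀ ∧ J x₀ ≤ ρ * J x := fun x hx =>
    hJV' ⟨(hS hx).2.2, (hS hx).1⟩
  obtain ⟨image_le, le_image⟩ := hVS S (hS.trans (inter_subset_inter_right _ inter_subset_left))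
  have hρκ' : (ρ : ℝ≥0∞) * ρ ≤ κ := by exact_mod_cast (pow_two ρ ▸ hρκ).le
  constructor
  · calc μ (Φ '' S) ≤ ρ * ∫⁻ _ in S, J x₀ ∂μ := by rwa [setLIntegral_const]
      _ ≤ ρ * ∫⁻ x in S, ρ * J x ∂μ := by
        refine mul_le_mul_right ?_ _
        exact setLIntegral_mono' S_meas fun x hx => by exact_mod_cast (J_bounds x hx).2
      _ = ρ * ρ * ∫⁻ x in S, J x ∂μ := by
        rw [lintegral_const_mul' _ _ ENNReal.coe_ne_top, mul_assoc]
      _ ≤ κ * ∫⁻ x in S, J x ∂μ := by gcongr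
  · calc ∫⁻ x in S, J x ∂μ ≤ ∫⁻ _ in S, ρ * J x₀ ∂μ :=
        setLIntegral_mono' S_meas fun x hx => by exact_mod_cast (J_bounds x hx).1
      _ = ρ * (J x₀ * μ S) := by rw [setLIntegral_const, mul_assoc]
      _ ≤ ρ * (ρ * μ (Φ '' S)) := by gcongr
      _ ≤ κ * μ (Φ '' S) := by rw [← mul_assoc]; gcongr

theorem measure_image_eq_lintegral_of_scalesMeasureAt [PolishSpace X] [BorelSpace X]
    (hZ : MeasurableSet Z)
    (hΦ : ContinuousOn Φ Z) (hinj : InjOn Φ Z) (hJ : ContinuousOn J Z) (hJ₀ : ∀ x ∈ Z, J x ≠ 0)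
    (h : ∀ x ∈ Z, ScalesMeasureAt μ Φ Z (J x) x) :
    μ (Φ '' Z) = ∫⁻ x in Z, J x ∂μ := by
  set imageMeasure : Measure Z := .comap (Z.domRestrict Φ) μ
  set densityMeasure : Measure Z := .comap (↑) (μ.withDensity fun x => J x)
  have imageMeasure_apply : ∀ S, imageMeasure S = μ (Φ '' ((↑) '' S)) := fun S => by
    rw [(hΦ.measurableEmbedding hZ hinj).comap_apply, image_image]; rfl
  have densityMeasure_apply : ∀ S, MeasurableSet S →
      densityMeasure S = ∫⁻ x in ((↑) '' S : Set X), J x ∂μ := fun S hS => by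
    rw [comap_subtype_coe_apply hZ, withDensity_apply _ (hZ.subtype_image hS)]
  have local_bounds : ∀ κ : ℝ≥0, 1 < κ → ∀ x : Z, ∃ V ∈ 𝓝 x, ∀ S ⊆ V, MeasurableSet S →
      imageMeasure S ≤ κ * densityMeasure S ∧ densityMeasure S ≤ κ * imageMeasure S := by
    intro κ hκ x
    obtain ⟨V, hV, bounds⟩ := (h x x.2).exists_lintegral_bounds (hJ x x.2) (hJ₀ x x.2) hκ
    refine ⟨(↑) ⁻¹' V, continuous_subtype_val.continuousAt.preimage_mem_nhds hV, fun S hSV hS => ?_⟩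
    rw [imageMeasure_apply, densityMeasure_apply S hS]
    exact bounds _ (subset_inter (Subtype.coe_image_subset _ _) (image_subset_iff.2 hSV))
      (hZ.subtype_image hS)
  have image_le : ∀ κ : ℝ≥0, 1 < κ → imageMeasure ≤ (κ : ℝ≥0∞) • densityMeasure := fun κ hκ =>
    measure_le_of_forall_exists_nhds fun x => (local_bounds κ hκ x).imp fun V hV =>
      ⟨hV.1, fun S hSV hS => (hV.2 S hSV hS).1⟩
  have le_image : ∀ κ : ℝ≥0, 1 < κ → densityMeasure ≤ (κ : ℝ≥0∞) • imageMeasure := fun κ hκ =>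
    measure_le_of_forall_exists_nhds fun x => (local_bounds κ hκ x).imp fun V hV =>
      ⟨hV.1, fun S hSV hS => (hV.2 S hSV hS).2⟩
  calc μ (Φ '' Z) = imageMeasure univ := by simp [imageMeasure_apply]
    _ = densityMeasure univ :=
      le_antisymm (le_of_forall_one_lt_le_coe_mul fun κ hκ => image_le κ hκ univ)
        (le_of_forall_one_lt_le_coe_mul fun κ hκ => le_image κ hκ univ)
    _ = ∫⁻ x in Z, J x ∂μ := by simp [densityMeasure_apply]

end AreaFormula

/-! ### Tangential determinants -/

section Secant

variable {E : Type*} [NormedAddCommGroup E] [InnerProductSpace ℝ E]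

/-- The reciprocal of the cosine of the angle between `M` and `N`, with value `0` for orthogonal
vectors. -/
noncomputable def secAngle (M N : E) : ℝ := ‖M‖ * ‖N‖ / ⟪M, N⟫

theorem secAngle_self {N : E} (hN : N ≠ 0) : secAngle N N = 1 := by
  rw [secAngle, ← real_inner_self_eq_norm_mul_norm, div_self (inner_self_ne_zero.2 hN)]

theorem secAngle_sub_one_isBigO {N₀ : E} (hN₀ : N₀ ≠ 0) :
    (fun p : E × E => secAngle p.1 p.2 - 1) =O[𝓝 (N₀, N₀)] fun p => ‖p.1 - p.2‖ ^ 2 := by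
  have inner_tendsto : Tendsto (fun p : E × E => ⟪p.1, p.2⟫) (𝓝 (N₀, N₀)) (𝓝 ⟪N₀, N₀⟫) :=
    continuous_inner.continuousAt
  have inner_pos := inner_tendsto.eventually (lt_mem_nhds (real_inner_self_pos.2 hN₀))
  have bound : (fun p : E × E => ‖p.1‖ * ‖p.2‖ - ⟪p.1, p.2⟫) =O[𝓝 (N₀, N₀)]
      fun p => ‖p.1 - p.2‖ ^ 2 := by
    refine .of_norm_le fun p => ?_
    rw [Real.norm_of_nonneg (sub_nonneg.2 (real_inner_le_norm _ _)), norm_sub_sq_real]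
    nlinarith [sq_nonneg (‖p.1‖ - ‖p.2‖), real_inner_le_norm p.1 p.2]
  have inv_bounded := (inner_tendsto.inv₀ (inner_self_ne_zero.2 hN₀)).isBigO_one ℝ
  refine (bound.mul inv_bounded).congr' ?_ (.of_eq (by simp))
  filter_upwards [inner_pos] with p hp
  rw [secAngle]
  field_simp

end Secant

section Determinant

theorem det_eq_mul_det_restrict_of_ker_eq {K V : Type*} [Field K] [AddCommGroup V] [Module K V]
    [FiniteDimensional K V] {ℓ : V →ₗ[K] K} (hℓ : ℓ ≠ 0) {L : V →ₗ[K] V} {c : K}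
    (hL : ∀ v, ℓ (L v) = c * ℓ v) {p : Submodule K V} (hp : ℓ.ker = p)
    (hLp : ∀ v ∈ p, L v ∈ p) :
    L.det = c * (L.restrict hLp).det := by
  subst hp
  have mapQ_eq : ℓ.ker.mapQ ℓ.ker L hLp = c • LinearMap.id := by
    refine Submodule.linearMap_qext _ (LinearMap.ext fun v => ?_)
    simpa [← Submodule.Quotient.mk_smul, Submodule.Quotient.eq, sub_eq_zero] using hL v
  have finrank_quotient : finrank K (V ⧸ ℓ.ker) = 1 := by
    rw [ℓ.quotKerEquivRange.finrank_eq, LinearMap.range_eq_top.2 (LinearMap.surjective hℓ),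
      finrank_top, finrank_self]
  rw [L.det_eq_det_mul_det ℓ.ker hLp, mapQ_eq, mul_comm]
  simp [finrank_quotient]

theorem hasDerivAt_det_one_add_smul {𝕜 E : Type*} [NontriviallyNormedField 𝕜] [AddCommGroup E]
    [Module 𝕜 E] [FiniteDimensional 𝕜 E] (X : E →ₗ[𝕜] E) :
    HasDerivAt (fun r : 𝕜 => LinearMap.det (1 + r • X)) (LinearMap.trace 𝕜 E X) 0 := by
  let b := finBasis 𝕜 E
  let M := LinearMap.toMatrix b b X
  let q := Matrix.det (1 + (Polynomial.X : Polynomial 𝕜) • M.map Polynomial.C)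
  have det_eq : ∀ r : 𝕜, LinearMap.det (1 + r • X) = q.eval r := fun r => by
    rw [← LinearMap.det_toMatrix b, map_add, map_smul, LinearMap.toMatrix_one]
    simp [q, M, eval_det, ← Matrix.smul_eq_mul_diagonal]
  have deriv_eq : q.derivative.eval 0 = LinearMap.trace 𝕜 E X := by
    rw [Matrix.derivative_det_one_add_X_smul, LinearMap.trace_eq_matrix_trace 𝕜 b]
  simpa only [det_eq, deriv_eq] using q.hasDerivAt 0

theorem differentiable_det {𝕜 E : Type*} [NontriviallyNormedField 𝕜] [CompleteSpace 𝕜]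
    [NormedAddCommGroup E] [NormedSpace 𝕜 E] [FiniteDimensional 𝕜 E] :
    Differentiable 𝕜 (fun A : E →L[𝕜] E => A.det) := by
  let b := finBasis 𝕜 E
  have entry (i j) :
      Differentiable 𝕜 fun A : E →L[𝕜] E => LinearMap.toMatrix b b (A : E →ₗ[𝕜] E) i j := by
    simp only [LinearMap.toMatrix_apply]
    let c : E →L[𝕜] 𝕜 := (b.coord i).toContinuousLinearMap
    exact (c.differentiable.comp (differentiable_id.clm_apply (differentiable_const (b j))))
  simp only [ContinuousLinearMap.det, ← LinearMap.det_toMatrix b, Matrix.det_apply]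
  fun_prop

end Determinant

section TangentialJacobian

variable {E : Type*} [NormedAddCommGroup E] [InnerProductSpace ℝ E] [FiniteDimensional ℝ E]
  {M N : E}

theorem cast_finrank_orthogonal_singleton (hN : N ≠ 0) :
    (finrank ℝ (ℝ ∙ N)ᗮ : ℝ) = finrank ℝ E - 1 := by
  rw [← (ℝ ∙ N).finrank_add_finrank_orthogonal, finrank_span_singleton hN]
  simp

theorem normDet_linearIsometryEquiv_comp {U V W : Type*}
    [NormedAddCommGroup U] [InnerProductSpace ℝ U] [FiniteDimensional ℝ U]
    [NormedAddCommGroup V] [InnerProductSpace ℝ V] [NormedAddCommGroup W] [InnerProductSpace ℝ W]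
    (R : V ≃ₗᵢ[ℝ] W) (L : U →ₗ[ℝ] V) : (R.toLinearEquiv.toLinearMap ∘ₗ L).normDet = L.normDet := by
  rw [LinearMap.normDet_comp]
  have := (R.toLinearIsometry.comp L.range.subtypeₗᵢ).normDet_eq_one
  exact (congrArg (· * L.normDet) this).trans (one_mul _)

theorem normDet_domRestrict_orthogonal_mul (hM : M ≠ 0) (hN : N ≠ 0) {L : E →ₗ[ℝ] E} {c : ℝ}
    (hL : ∀ v, ⟪M, L v⟫ = c * ⟪N, v⟫) :
    (L.domRestrict (ℝ ∙ N)ᗮ).normDet * (|c| * ‖N‖) = |L.det| * ‖M‖ := by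
  -- Reflecting the direction of `M` to that of `N` turns `L` into an endomorphism preserving `Nᗮ`.
  let R : E ≃ₗᵢ[ℝ] E := (ℝ ∙ (‖N‖ • M - ‖M‖ • N))ᗮ.reflection
  have hR : ‖N‖ • R M = ‖M‖ • N := by
    rw [← map_smul]
    exact Submodule.reflection_sub (by simp [norm_smul, mul_comm])
  let K : E →ₗ[ℝ] E := R.toLinearEquiv.toLinearMap ∘ₗ L
  have hK : ∀ v, ⟪N, K v⟫ = (c * ‖N‖ / ‖M‖) * ⟪N, v⟫ := fun v => by
    have : ‖M‖ * ⟪N, K v⟫ = ‖N‖ * (c * ⟪N, v⟫) := by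
      rw [← real_inner_smul_left, ← hR, real_inner_smul_left, ← hL]
      exact congrArg _ (R.inner_map_map M (L v))
    field_simp
    linarith
  have ker_inner : (innerₛₗ ℝ N).ker = (ℝ ∙ N)ᗮ := by
    ext v
    simp [Submodule.mem_orthogonal_singleton_iff_inner_right]
  have K_mem : ∀ v ∈ (ℝ ∙ N)ᗮ, K v ∈ (ℝ ∙ N)ᗮ := fun v hv => by
    simp_all [Submodule.mem_orthogonal_singleton_iff_inner_right]
  have det_K := det_eq_mul_det_restrict_of_ker_eq (ℓ := innerₛₗ ℝ N)
    (fun h => hN (by simpa using LinearMap.congr_fun h N)) hK ker_inner K_mem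
  have normDet_restrict : (K.restrict K_mem).normDet = (L.domRestrict (ℝ ∙ N)ᗮ).normDet := by
    rw [← normDet_linearIsometryEquiv_comp R]
    exact LinearMap.normDet_codRestrict _
  have hM' : ‖M‖ ≠ 0 := norm_ne_zero_iff.2 hM
  have abs_det_K : |K.det| = |L.det| := by
    rw [← K.normDet_eq_abs_det, ← L.normDet_eq_abs_det, normDet_linearIsometryEquiv_comp]
  rw [← abs_det_K, det_K, abs_mul, ← LinearMap.normDet_eq_abs_det, normDet_restrict,
    abs_div, abs_mul, abs_norm, abs_norm]
  field_simp

theorem injOn_of_normDet_domRestrict_ne_zero {A : E →L[ℝ] E} {P : Submodule ℝ E}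
    (h : ((A : E →ₗ[ℝ] E).domRestrict P).normDet ≠ 0) : InjOn A P := by
  rw [ne_eq, LinearMap.normDet_eq_zero_iff_ker_ne_bot, not_not] at h
  exact injOn_iff_injective.2 (LinearMap.ker_eq_bot.1 h)

theorem trace_comp_starProjection_orthogonal_singleton (H : E →L[ℝ] E) (N : E) :
    LinearMap.trace ℝ E (H ∘L (ℝ ∙ N)ᗮ.starProjection) =
      LinearMap.trace ℝ E H - ⟪‖N‖⁻¹ • N, H (‖N‖⁻¹ • N)⟫ := by
  have comp_eq : ((H ∘L (ℝ ∙ N)ᗮ.starProjection : E →L[ℝ] E) : E →ₗ[ℝ] E) =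
      H - (innerₛₗ ℝ (‖N‖⁻¹ • N)).smulRight (H (‖N‖⁻¹ • N)) := by
    ext v
    simp [Submodule.starProjection_orthogonal_val, Submodule.starProjection_singleton, smul_smul]
    ring_nf
  rw [comp_eq, map_sub, LinearMap.trace_smulRight, innerₛₗ_apply_apply]

theorem normDet_domRestrict_one_add_smul_add_smulRight {H : E →L[ℝ] E} {ℓ : E →L[ℝ] ℝ} {s : ℝ}
    (hMN : 0 < ⟪M, N⟫) (hM : ∀ v ∈ (ℝ ∙ N)ᗮ, ⟪M, v + s • H v + ℓ v • N⟫ = 0) :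
    ((1 + s • H + ℓ.smulRight N : E →L[ℝ] E).toLinearMap.domRestrict (ℝ ∙ N)ᗮ).normDet =
      |(1 + s • (H ∘L (ℝ ∙ N)ᗮ.starProjection)).det| * secAngle M N := by
  have hM₀ : M ≠ 0 := by rintro rfl; simp at hMN
  have hN₀ : N ≠ 0 := by rintro rfl; simp at hMN
  set π := (ℝ ∙ N)ᗮ.starProjection
  -- On `Nᗮ` the map agrees with `C ∘ T`, where the transvection `T` has determinant one.
  let C : E →ₗ[ℝ] E := ((1 + s • (H ∘L π) : E →L[ℝ] E) : E →ₗ[ℝ] E)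
  let T : E →ₗ[ℝ] E := LinearMap.transvection ((ℓ ∘L π : E →L[ℝ] ℝ) : E →ₗ[ℝ] ℝ) N
  have π_N : π N = 0 := (ℝ ∙ N)ᗮ.starProjection_apply_eq_zero_iff.2 (by simp)
  have CT_apply : ∀ v, C (T v) = v + s • H (π v) + ℓ (π v) • N := fun v => by
    simp [C, T, LinearMap.transvection.apply, π_N]
    abel
  have det_T : T.det = 1 := by simp [T, LinearMap.transvection.det, π_N]
  have inner_CT : ∀ v, ⟪M, (C ∘ₗ T) v⟫ = (⟪M, N⟫ / ‖N‖ ^ 2) * ⟪N, v⟫ := fun v => by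
    have hv : v = π v + (⟪N, v⟫ / ‖N‖ ^ 2) • N := by
      simp [π, Submodule.starProjection_orthogonal_val, Submodule.starProjection_singleton]
    have := hM (π v) (Submodule.starProjection_apply_mem _ v)
    have CT_v : C (T v) =
        (π v + s • H (π v) + ℓ (π v) • N) + (⟪N, v⟫ / ‖N‖ ^ 2) • N := by
      rw [CT_apply]
      nth_rw 1 [hv]
      abel
    rw [LinearMap.comp_apply, CT_v, inner_add_right, this, real_inner_smul_right]
    ring
  have domRestrict_eq : (1 + s • H + ℓ.smulRight N : E →L[ℝ] E).toLinearMap.domRestrict (ℝ ∙ N)ᗮ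
      = (C ∘ₗ T).domRestrict (ℝ ∙ N)ᗮ := by
    ext v
    have := (ℝ ∙ N)ᗮ.starProjection_eq_self_iff.2 v.2
    simp [CT_apply, π, this]
  have := normDet_domRestrict_orthogonal_mul hM₀ hN₀ inner_CT
  rw [← domRestrict_eq, LinearMap.det_comp, det_T, mul_one, abs_of_pos (by positivity)] at this
  change _ = |C.det| * (‖M‖ * ‖N‖ / ⟪M, N⟫)
  have hN' : ‖N‖ ≠ 0 := norm_ne_zero_iff.2 hN₀
  field_simp at this ⊢
  linarith

end TangentialJacobian

/-! ### Level sets as normal graphs -/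

section InverseFunctionNearCompact

variable {X Y : Type*} [NormedAddCommGroup X] [NormedSpace ℝ X]
  [NormedAddCommGroup Y] [NormedSpace ℝ Y]

theorem hasStrictFDerivAt_of_contDiffAt_one {F : X → Y} {e : X ≃L[ℝ] Y} {x : X}
    (hF : ContDiffAt ℝ 1 F x) (he : e = fderiv ℝ F x) :
    HasStrictFDerivAt F (e : X →L[ℝ] Y) x :=
  he ▸ hF.hasStrictFDerivAt one_ne_zero

theorem isInvertible_fderiv_prodMk_fst {Y' : Type*} [NormedAddCommGroup Y'] [NormedSpace ℝ Y']
    {G : X × Y → Y'} {q : X × Y} (hG : DifferentiableAt ℝ G q)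
    (hG' : (fderiv ℝ (fun y => G (q.1, y)) q.2).IsInvertible) :
    (fderiv ℝ (fun p : X × Y => (p.1, G p)) q).IsInvertible := by
  obtain ⟨A, hA⟩ := hG'
  refine ⟨(ContinuousLinearEquiv.refl ℝ X).skewProd A (fderiv ℝ G q ∘L .inl ℝ X Y), ?_⟩
  have fiber : fderiv ℝ (fun y => G (q.1, y)) q.2 = fderiv ℝ G q ∘L .inr ℝ X Y :=
    (hG.hasFDerivAt.comp q.2 (hasFDerivAt_prodMk_right q.1 q.2)).fderiv
  rw [(hasFDerivAt_fst.prodMk hG.hasFDerivAt).fderiv]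
  refine ContinuousLinearMap.ext fun v => ?_
  have hAv : A v.2 = fderiv ℝ G q (0, v.2) := by
    rw [← A.coe_coe, hA, fiber]
    rfl
  simp [hAv, ← map_add]

variable [CompleteSpace X]

theorem exists_openPartialHomeomorph_of_injOn {F : X → Y} {W : Set X} (hW : IsOpen W)
    (hF : ∀ x ∈ W, ContDiffAt ℝ 1 F x) (hF' : ∀ x ∈ W, (fderiv ℝ F x).IsInvertible)
    (hinj : InjOn F W) :
    ∃ e : OpenPartialHomeomorph X Y, ⇑e = F ∧ e.source = W ∧ ContDiffOn ℝ 1 e.symm e.target := by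
  have isOpenMap : IsOpenMap (W.domRestrict F) := by
    refine isOpenMap_iff_nhds_le.2 fun x => ?_
    obtain ⟨e, he⟩ := hF' x x.2
    rw [domRestrict_eq, ← map_map, map_nhds_subtype_coe_eq_nhds x.2 (hW.mem_nhds x.2),
      (hasStrictFDerivAt_of_contDiffAt_one (hF x x.2) he).map_nhds_eq_of_equiv]
    rfl
  let e : OpenPartialHomeomorph X Y := .ofContinuousOpenRestrict (hinj.toPartialEquiv F W)
    (fun x hx => (hF x hx).continuousAt.continuousWithinAt) isOpenMap hW
  refine ⟨e, rfl, rfl, fun y hy => ?_⟩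
  have hx : e.symm y ∈ W := e.map_target hy
  obtain ⟨A, hA⟩ := hF' _ hx
  exact (e.contDiffAt_symm hy (hasStrictFDerivAt_of_contDiffAt_one (hF _ hx) hA).hasFDerivAt
    (hF _ hx)).contDiffWithinAt

theorem exists_openPartialHomeomorph_of_isCompact {F : X → Y} {C : Set X} (hC : IsCompact C)
    (hF : ∀ x ∈ C, ContDiffAt ℝ 1 F x) (hF' : ∀ x ∈ C, (fderiv ℝ F x).IsInvertible)
    (hinj : InjOn F C) :
    ∃ e : OpenPartialHomeomorph X Y, ⇑e = F ∧ C ⊆ e.source ∧ ContDiffOn ℝ 1 e.symm e.target := by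
  have hT : ∃ T ∈ 𝓝ˢ C, InjOn F T := by
    refine hinj.exists_mem_nhdsSet hC (fun x hx => (hF x hx).continuousAt) fun x hx => ?_
    obtain ⟨A, hA⟩ := hF' x hx
    have strict := hasStrictFDerivAt_of_contDiffAt_one (hF x hx) hA
    exact ⟨_, (strict.toOpenPartialHomeomorph F).open_source.mem_nhds
      strict.mem_toOpenPartialHomeomorph_source, (strict.toOpenPartialHomeomorph F).injOn⟩
  have hV : {x | ContDiffAt ℝ 1 F x ∧ (fderiv ℝ F x).IsInvertible} ∈ 𝓝ˢ C := by
    refine mem_nhdsSet_iff_forall.2 fun x hx => ?_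
    obtain ⟨A, hA⟩ := hF' x hx
    have fderiv_tendsto : Tendsto (fderiv ℝ F) (𝓝 x) (𝓝 A) :=
      hA ▸ (hF x hx).continuousAt_fderiv one_ne_zero
    exact ((hF x hx).eventually (by simp)).and (fderiv_tendsto.eventually A.nhds)
  obtain ⟨T, hT, injOn_T⟩ := hT
  obtain ⟨W, hW, hCW, hWTV⟩ := mem_nhdsSet_iff_exists.1 (inter_mem hT hV)
  obtain ⟨e, he, rfl, symm_contDiffOn⟩ := exists_openPartialHomeomorph_of_injOn hW
    (fun x hx => (hWTV hx).2.1) (fun x hx => (hWTV hx).2.2)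
    (injOn_T.mono (hWTV.trans inter_subset_left))
  exact ⟨e, he, hCW, symm_contDiffOn⟩

theorem exists_implicitFunction_of_isCompact [CompleteSpace Y] {G : X × Y → Y} {K : Set X}
    (hK : IsCompact K) (hG : ∀ x ∈ K, ContDiffAt ℝ 1 G (x, 0)) (hG₀ : ∀ x ∈ K, G (x, 0) = 0)
    (hG' : ∀ x ∈ K, (fderiv ℝ (fun y => G (x, y)) 0).IsInvertible) :
    ∃ (s : X → Y) (O : Set X), IsOpen O ∧ K ⊆ O ∧ ContDiffOn ℝ 1 s O ∧
      (∀ x ∈ O, G (x, s x) = 0) ∧ ∀ x ∈ O, G (x, 0) = 0 → s x = 0 := by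
  let F : X × Y → X × Y := fun p => (p.1, G p)
  have F_zero : ∀ x, G (x, 0) = 0 → F (x, 0) = (x, 0) := fun x hx => by simp [F, hx]
  obtain ⟨e, he, hKe, symm_contDiffOn⟩ :=
    exists_openPartialHomeomorph_of_isCompact (F := F) (C := (fun x => (x, 0)) '' K)
      (hK.image (by fun_prop))
      (forall_mem_image.2 fun x hx => contDiffAt_fst.prodMk (hG x hx))
      (forall_mem_image.2 fun x hx =>
        isInvertible_fderiv_prodMk_fst ((hG x hx).differentiableAt one_ne_zero) (hG' x hx))
      (by
        rintro _ ⟨x, hx, rfl⟩ _ ⟨y, hy, rfl⟩ hxy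
        rwa [F_zero x (hG₀ x hx), F_zero y (hG₀ y hy)] at hxy)
  have mem_source : ∀ x ∈ K, (x, 0) ∈ e.source := fun x hx => hKe (mem_image_of_mem _ hx)
  refine ⟨fun x => (e.symm (x, 0)).2, (fun x => (x, 0)) ⁻¹' (e.source ∩ e.target),
    (e.open_source.inter e.open_target).preimage (by fun_prop),
    fun x hx => ⟨mem_source x hx, ?_⟩, ?_, fun x hx => ?_, fun x hx hGx => ?_⟩
  · simpa [he, F_zero x (hG₀ x hx)] using e.map_source (mem_source x hx)
  · exact contDiff_snd.comp_contDiffOn (symm_contDiffOn.comp (by fun_prop) fun x hx => hx.2)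
  · have right_inv : F (e.symm (x, 0)) = (x, 0) := he ▸ e.right_inv hx.2
    have fst_eq : (e.symm (x, 0)).1 = x := congrArg Prod.fst right_inv
    calc G (x, (e.symm (x, 0)).2) = G (e.symm (x, 0)) := congrArg G (Prod.ext fst_eq.symm rfl)
      _ = 0 := congrArg Prod.snd right_inv
  · have left_inv := e.left_inv hx.1
    rw [he, F_zero x hGx] at left_inv
    simp [left_inv]

end InverseFunctionNearCompact

section NormalDisplacement

variable {E : Type*} [NormedAddCommGroup E] [InnerProductSpace ℝ E] [CompleteSpace E]
  {f h : E → ℝ} {s : ℝ × E → ℝ} {O : Set (ℝ × E)} {Z : Set E} {q : ℝ × E} {x : E}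

theorem contDiff_gradient {n : WithTop ℕ∞} (hf : ContDiff ℝ (n + 1) f) :
    ContDiff ℝ n (gradient f) :=
  (InnerProductSpace.toDual ℝ E).symm.toContinuousLinearEquiv.contDiff.comp
    (hf.fderiv_right le_rfl)

/-- The point reached from `q.2` at time `q.1` by moving along the gradient of `f`, scaled by the
displacement `s`. -/
noncomputable def normalShift (f : E → ℝ) (s : ℝ × E → ℝ) (q : ℝ × E) : E :=
  q.2 + s q • gradient f q.2

/-- The gradient of `f + q.1 * h` at the shifted point `normalShift f s q`. -/
noncomputable def shiftedGradient (f h : E → ℝ) (s : ℝ × E → ℝ) (q : ℝ × E) : E :=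
  gradient f (normalShift f s q) + q.1 • gradient h (normalShift f s q)

/-- On the open set `O` of pairs `(t, x)`, the displacement `s` along the gradient of `f` carries
the level sets of `f` to those of `f + t * h`. -/
structure IsNormalDisplacement (f h : E → ℝ) (s : ℝ × E → ℝ) (O : Set (ℝ × E)) : Prop where
  isOpen : IsOpen O
  contDiffOn : ContDiffOn ℝ 1 s O
  apply_zero : ∀ x, (0, x) ∈ O → s (0, x) = 0
  apply_normalShift : ∀ q ∈ O, f (normalShift f s q) + q.1 * h (normalShift f s q) = f q.2

theorem hasDerivAt_comp_add_smul_gradient (hf : DifferentiableAt ℝ f x) :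
    HasDerivAt (fun r : ℝ => f (x + r • gradient f x)) (‖gradient f x‖ ^ 2) 0 := by
  have line : HasDerivAt (fun r : ℝ => x + r • gradient f x) (gradient f x) 0 := by
    simpa using ((hasDerivAt_id (0 : ℝ)).smul_const (gradient f x)).const_add x
  have hf' : HasFDerivAt f (fderiv ℝ f x) (x + (0 : ℝ) • gradient f x) := by
    simpa using hf.hasFDerivAt
  rw [← real_inner_self_eq_norm_sq, inner_gradient_left]
  exact hf'.comp_hasDerivAt (0 : ℝ) line

theorem exists_isNormalDisplacement (hf : ContDiff ℝ 2 f) (hh : ContDiff ℝ 1 h)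
    (hZ : IsCompact Z) (hreg : ∀ x ∈ Z, gradient f x ≠ 0) :
    ∃ s O, IsNormalDisplacement f h s O ∧ {0} ×ˢ Z ⊆ O := by
  let y : (ℝ × E) × ℝ → E := fun p => p.1.2 + p.2 • gradient f p.1.2
  let G : (ℝ × E) × ℝ → ℝ := fun p => f (y p) + p.1.1 * h (y p) - f p.1.2
  have G_zero : ∀ x, G ((0, x), 0) = 0 := by simp [G, y]
  have contDiff_G : ContDiff ℝ 1 G := by
    have := hf.of_le one_le_two
    have := contDiff_gradient (n := 1) hf
    fun_prop
  have fiber : ∀ x ∈ Z, (fderiv ℝ (fun r => G ((0, x), r)) 0).IsInvertible := fun x hx => by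
    have := (hasDerivAt_comp_add_smul_gradient
      (hf.differentiable two_ne_zero x)).sub_const (f x)
    have fiber_eq : (fun r => G ((0, x), r)) = fun r => f (x + r • gradient f x) - f x := by
      simp [G, y]
    rw [fiber_eq, (this.hasFDerivAt_equiv (pow_ne_zero 2 (norm_ne_zero_iff.2 (hreg x hx)))).fderiv]
    exact ContinuousLinearMap.isInvertible_equiv
  obtain ⟨s, O, hO, hZO, hs, s_solves, s_eq_zero⟩ :=
    exists_implicitFunction_of_isCompact (G := G) (isCompact_singleton.prod hZ)
      (fun p _ => contDiff_G.contDiffAt)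
      (fun p hp => by obtain ⟨_, x⟩ := p; obtain ⟨rfl, -⟩ := hp; exact G_zero x)
      (fun p hp => by obtain ⟨_, x⟩ := p; obtain ⟨rfl, hx⟩ := hp; exact fiber x hx)
  exact ⟨s, O, ⟨hO, hs, fun x hx => s_eq_zero _ hx (G_zero x),
    fun q hq => sub_eq_zero.1 (s_solves q hq)⟩, hZO⟩

namespace IsNormalDisplacement

theorem contDiffAt (hs : IsNormalDisplacement f h s O) (hq : q ∈ O) : ContDiffAt ℝ 1 s q :=
  hs.contDiffOn.contDiffAt (hs.isOpen.mem_nhds hq)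

theorem contDiffAt_normalShift (hs : IsNormalDisplacement f h s O) (hf : ContDiff ℝ 2 f)
    (hq : q ∈ O) : ContDiffAt ℝ 1 (normalShift f s) q := by
  have := hs.contDiffAt hq
  have := contDiff_gradient (n := 1) hf
  unfold normalShift
  fun_prop

theorem normalShift_zero (hs : IsNormalDisplacement f h s O) (hx : (0, x) ∈ O) :
    normalShift f s (0, x) = x := by
  simp [normalShift, hs.apply_zero x hx]

theorem hasStrictFDerivAt_normalShift (hs : IsNormalDisplacement f h s O) (hf : ContDiff ℝ 2 f)
    (hq : q ∈ O) :
    HasStrictFDerivAt (fun y => normalShift f s (q.1, y))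
      (1 + s q • fderiv ℝ (gradient f) q.2 +
        (fderiv ℝ s q ∘L .inr ℝ ℝ E).smulRight (gradient f q.2)) q.2 := by
  have hs' : HasStrictFDerivAt (fun y => s (q.1, y)) (fderiv ℝ s q ∘L .inr ℝ ℝ E) q.2 :=
    ((hs.contDiffAt hq).hasStrictFDerivAt one_ne_zero).comp q.2
      ((hasStrictFDerivAt_const q.1 q.2).prodMk (hasStrictFDerivAt_id q.2))
  have hN := ((contDiff_gradient (n := 1) hf).contDiffAt (x := q.2)).hasStrictFDerivAt one_ne_zero
  rw [add_assoc]
  exact (hasStrictFDerivAt_id q.2).add (hs'.smul hN)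

theorem inner_fderiv_normalShift (hs : IsNormalDisplacement f h s O) (hf : ContDiff ℝ 2 f)
    (hh : ContDiff ℝ 1 h) (hq : q ∈ O) (v : E) :
    ⟪shiftedGradient f h s q,
      v + s q • fderiv ℝ (gradient f) q.2 v + fderiv ℝ s q (0, v) • gradient f q.2⟫ =
      ⟪gradient f q.2, v⟫ := by
  have shift := (hs.hasStrictFDerivAt_normalShift hf hq).hasFDerivAt
  have composite := (((hf.differentiable two_ne_zero _).hasFDerivAt.comp q.2 shift).add
    (((hh.differentiable one_ne_zero _).hasFDerivAt.comp q.2 shift).const_mul q.1))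
  have eventually_eq : (fun y => f (normalShift f s (q.1, y)) +
      q.1 * h (normalShift f s (q.1, y))) =ᶠ[𝓝 q.2] f := by
    filter_upwards [(Continuous.prodMk_right q.1).continuousAt.eventually
      (hs.isOpen.mem_nhds hq)] with y hy using hs.apply_normalShift _ hy
  have fderiv_eq := ((composite.congr_of_eventuallyEq eventually_eq.symm).unique
    (hf.differentiable two_ne_zero q.2).hasFDerivAt)
  rw [shiftedGradient, inner_add_left, real_inner_smul_left]
  simp only [inner_gradient_left, ← fderiv_eq]
  simp [mul_add]

theorem mul_norm_gradient_sq_add_eq_zero (hs : IsNormalDisplacement f h s O)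
    (hf : DifferentiableAt ℝ f x) (hh : DifferentiableAt ℝ h x) (hx : (0, x) ∈ O) {s' : ℝ}
    (hs' : HasDerivAt (fun t => s (t, x)) s' 0) : s' * ‖gradient f x‖ ^ 2 + h x = 0 := by
  have shift : HasDerivAt (fun t => normalShift f s (t, x)) (s' • gradient f x) 0 := by
    simpa only [normalShift] using (hs'.smul_const (gradient f x)).const_add x
  have shift_zero := hs.normalShift_zero hx
  have hf' : HasFDerivAt f (fderiv ℝ f x) (normalShift f s (0, x)) := by
    rw [shift_zero]
    exact hf.hasFDerivAt
  have hh' : HasFDerivAt h (fderiv ℝ h x) (normalShift f s (0, x)) := by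
    rw [shift_zero]
    exact hh.hasFDerivAt
  have composite := (hf'.comp_hasDerivAt (0 : ℝ) shift).add
    ((hasDerivAt_id (0 : ℝ)).mul (hh'.comp_hasDerivAt (0 : ℝ) shift))
  have eventually_eq : (fun t => f (normalShift f s (t, x)) +
      t * h (normalShift f s (t, x))) =ᶠ[𝓝 0] fun _ => f x := by
    filter_upwards [(Continuous.prodMk_left x).continuousAt.eventually
      (hs.isOpen.mem_nhds hx)] with t ht using hs.apply_normalShift _ ht
  have deriv_eq := (composite.congr_of_eventuallyEq eventually_eq.symm).unique
    (hasDerivAt_const 0 (f x))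
  rw [← real_inner_self_eq_norm_sq, inner_gradient_left]
  simpa [shift_zero] using deriv_eq

theorem hasDerivAt_zero (hs : IsNormalDisplacement f h s O) (hf : DifferentiableAt ℝ f x)
    (hh : DifferentiableAt ℝ h x) (hx : (0, x) ∈ O) (hN : gradient f x ≠ 0) :
    HasDerivAt (fun t => s (t, x)) (-h x / ‖gradient f x‖ ^ 2) 0 := by
  have hs' : HasDerivAt (fun t => s (t, x)) (deriv (fun t => s (t, x)) 0) 0 := by
    have := (hs.contDiffAt hx).differentiableAt one_ne_zero
    exact (DifferentiableAt.comp (0 : ℝ) (g := s) this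
      (differentiableAt_id.prodMk (differentiableAt_const x))).hasDerivAt
  have deriv_mul := hs.mul_norm_gradient_sq_add_eq_zero hf hh hx hs'
  refine hs'.congr_deriv ?_
  rw [eq_div_iff (pow_ne_zero 2 (norm_ne_zero_iff.2 hN))]
  linarith

theorem exists_openPartialHomeomorph_prodMk_normalShift (hs : IsNormalDisplacement f h s O)
    (hf : ContDiff ℝ 2 f) (hZ : IsCompact Z) (hZO : {0} ×ˢ Z ⊆ O) :
    ∃ e : OpenPartialHomeomorph (ℝ × E) (ℝ × E),
      ⇑e = (fun q => (q.1, normalShift f s q)) ∧ {0} ×ˢ Z ⊆ e.source := by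
  have fiber : ∀ x, (0, x) ∈ O →
      (fderiv ℝ (fun y => normalShift f s (0, y)) x).IsInvertible := fun x hx => by
    have eventually_id : (fun y => normalShift f s (0, y)) =ᶠ[𝓝 x] id := by
      filter_upwards [(Continuous.prodMk_right (0 : ℝ)).continuousAt.eventually
        (hs.isOpen.mem_nhds hx)] with y hy using hs.normalShift_zero hy
    rw [eventually_id.fderiv_eq, fderiv_id]
    exact ⟨.refl ℝ E, rfl⟩
  obtain ⟨e, he, hZe, -⟩ := exists_openPartialHomeomorph_of_isCompact
    (F := fun q => (q.1, normalShift f s q)) (isCompact_singleton.prod hZ)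
    (fun q hq => contDiffAt_fst.prodMk (hs.contDiffAt_normalShift hf (hZO hq)))
    (fun q hq => isInvertible_fderiv_prodMk_fst
      ((hs.contDiffAt_normalShift hf (hZO hq)).differentiableAt one_ne_zero) (by
        obtain ⟨_, x⟩ := q; obtain ⟨rfl, hx⟩ := hq; exact fiber x (hZO ⟨rfl, hx⟩)))
    (by
      rintro ⟨_, x⟩ ⟨rfl, hx⟩ ⟨_, y⟩ ⟨rfl, hy⟩ hxy
      simpa only [hs.normalShift_zero (hZO ⟨rfl, hx⟩), hs.normalShift_zero (hZO ⟨rfl, hy⟩)]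
        using hxy)
  exact ⟨e, he, hZe⟩

theorem eventually_forall_mem_and_normalShift_mem (hs : IsNormalDisplacement f h s O)
    (hf : ContDiff ℝ 2 f) (hZ : IsCompact Z) (hZO : {0} ×ˢ Z ⊆ O) {W : Set (ℝ × E)} (hW : IsOpen W)
    (hZW : {0} ×ˢ Z ⊆ W) {U : Set E} (hU : IsOpen U) (hZU : Z ⊆ U) :
    ∀ᶠ t in 𝓝 (0 : ℝ), ∀ x ∈ Z, (t, x) ∈ W ∧ normalShift f s (t, x) ∈ U := by
  refine hZ.eventually_forall_of_forall_eventually fun x hx => ?_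
  have hx' : ((0 : ℝ), x) ∈ ({0} : Set ℝ) ×ˢ Z := ⟨rfl, hx⟩
  refine (hW.eventually_mem (hZW hx')).and
    ((hs.contDiffAt_normalShift hf (hZO hx')).continuousAt.eventually_mem ?_)
  rw [hs.normalShift_zero (hZO hx')]
  exact hU.mem_nhds (hZU hx)

theorem exists_levelSet_eq_image_normalShift (hs : IsNormalDisplacement f h s O)
    (hf : ContDiff ℝ 2 f) {c : ℝ} (hZ : IsCompact (f ⁻¹' {c})) (hZO : {0} ×ˢ (f ⁻¹' {c}) ⊆ O) :
    ∃ U : Set E, IsOpen U ∧ Bornology.IsBounded U ∧ f ⁻¹' {c} ⊆ U ∧ ∀ᶠ t in 𝓝 0,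
      InjOn (fun x => normalShift f s (t, x)) (f ⁻¹' {c}) ∧
      {y ∈ U | f y + t * h y = c} = (fun x => normalShift f s (t, x)) '' (f ⁻¹' {c}) := by
  obtain ⟨e, he, hZe⟩ := hs.exists_openPartialHomeomorph_prodMk_normalShift hf hZ hZO
  obtain ⟨I, U, hI, hU, zero_mem, hZU, IU_subset⟩ := generalized_tube_lemma
    (isCompact_singleton (x := (0 : ℝ))) hZ
    (e.isOpen_image_source_inter hs.isOpen) (by
      rintro ⟨_, x⟩ ⟨rfl, hx⟩
      exact ⟨(0, x), ⟨hZe ⟨rfl, hx⟩, hZO ⟨rfl, hx⟩⟩,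
        by simp [he, hs.normalShift_zero (hZO ⟨rfl, hx⟩)]⟩)
  obtain ⟨R, hZR⟩ := hZ.isBounded.subset_ball (0 : E)
  have hUR : IsOpen (U ∩ Metric.ball 0 R) := hU.inter Metric.isOpen_ball
  refine ⟨U ∩ Metric.ball 0 R, hUR, Metric.isBounded_ball.subset inter_subset_right,
    subset_inter hZU hZR, ?_⟩
  filter_upwards [hs.eventually_forall_mem_and_normalShift_mem hf hZ hZO
    (e.open_source.inter hs.isOpen) (subset_inter hZe hZO) hUR (subset_inter hZU hZR),
    hI.mem_nhds (zero_mem rfl)] with t ht htI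
  refine ⟨fun x hx y hy hxy => ?_, Subset.antisymm ?_ ?_⟩
  · exact congrArg Prod.snd (e.injOn (ht x hx).1.1 (ht y hy).1.1 (by simpa [he] using hxy))
  · rintro y ⟨hyU, hy⟩
    obtain ⟨⟨t', x⟩, ⟨-, hxO⟩, hxy⟩ := IU_subset (mk_mem_prod htI hyU.1)
    simp only [he, Prod.mk.injEq] at hxy
    obtain ⟨rfl, rfl⟩ := hxy
    exact ⟨x, (hs.apply_normalShift _ hxO).symm.trans hy, rfl⟩
  · rintro _ ⟨x, hx, rfl⟩
    exact ⟨(ht x hx).2, (hs.apply_normalShift _ (ht x hx).1.2).trans hx⟩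

end IsNormalDisplacement

end NormalDisplacement

/-! ### First variation of the measure -/

section DerivativeOfSetIntegral

theorem isBigO_prod_principal_of_isCompact {X Y F G : Type*} [TopologicalSpace Y] [Norm F]
    [SeminormedAddCommGroup G] {l : Filter X} {K : Set Y} (hK : IsCompact K) {u : X × Y → F}
    {v : X × Y → G} (h : ∀ y ∈ K, u =O[l ×ˢ 𝓝[K] y] v) : u =O[l ×ˢ 𝓟 K] v := by
  refine hK.induction_on (p := fun S => u =O[l ×ˢ 𝓟 S] v) (by simp)
    (fun S T hST hT => hT.mono (prod_mono_right _ (principal_mono.2 hST)))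
    (fun S T hS hT => ?_) fun y hy => ?_
  · rw [← sup_principal, prod_sup]
    exact hS.sup hT
  · obtain ⟨C, hC⟩ := (h y hy).bound
    obtain ⟨V, hV, S, hS, hVS⟩ := mem_prod_iff.1 hC
    exact ⟨S, hS, .of_bound C <| mem_prod_iff.2
      ⟨V, hV, S, mem_principal_self S, hVS⟩⟩

theorem hasDerivAt_setIntegral_of_isBigO {X : Type*} [TopologicalSpace X] [MeasurableSpace X]
    {μ : Measure X} {K : Set X} (hK : IsCompact K) (hKm : MeasurableSet K) (hμ : μ K ≠ ∞)
    {F : ℝ × X → ℝ} {F' : X → ℝ}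
    (hF_meas : ∀ᶠ t in 𝓝 0, AEStronglyMeasurable (fun x => F (t, x)) (μ.restrict K))
    (hF_int : IntegrableOn (fun x => F (0, x)) K μ)
    (hF'_meas : AEStronglyMeasurable F' (μ.restrict K))
    (h_bound : ∀ x ∈ K, (fun q : ℝ × X => F q - F (0, q.2)) =O[𝓝 0 ×ˢ 𝓝[K] x] Prod.fst)
    (h_diff : ∀ x ∈ K, HasDerivAt (fun t => F (t, x)) (F' x) 0) :
    HasDerivAt (fun t => ∫ x in K, F (t, x) ∂μ) (∫ x in K, F' x ∂μ) 0 := by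
  obtain ⟨C, hC⟩ := (isBigO_prod_principal_of_isCompact hK h_bound).bound
  have lipschitz : ∀ᶠ t in 𝓝 (0 : ℝ), ∀ x ∈ K, ‖F (t, x) - F (0, x)‖ ≤ C * ‖t - 0‖ := by
    simpa only [eventually_prod_principal_iff, sub_zero] using hC
  let L : ℝ →L[ℝ] ℝ →L[ℝ] ℝ := .smulRightL ℝ ℝ ℝ 1
  obtain ⟨integrable, hasFDerivAt⟩ := hasFDerivAt_integral_of_dominated_loc_of_lip'
    (F := fun t x => F (t, x)) (F' := fun x => L (F' x)) (bound := fun _ => C)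
    (lipschitz.and hF_meas) (fun t ht => ht.2) hF_int
    (L.continuous.comp_aestronglyMeasurable hF'_meas)
    (ae_restrict_of_forall_mem hKm fun x hx t ht => ht.1 x hx)
    (integrableOn_const hμ) (ae_restrict_of_forall_mem hKm fun x hx => (h_diff x hx).hasFDerivAt)
  have integral_eq : (∫ x in K, L (F' x) ∂μ) 1 = ∫ x in K, F' x ∂μ := by
    rw [ContinuousLinearMap.integral_apply integrable]
    simp [L]
  exact integral_eq ▸ hasFDerivAt.hasDerivAt

end DerivativeOfSetIntegral

section ShiftJacobian

variable {E : Type*} [NormedAddCommGroup E] [InnerProductSpace ℝ E]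

theorem continuousAt_starProjection_orthogonal_singleton {N₀ : E} (hN₀ : N₀ ≠ 0) :
    ContinuousAt (fun N : E => (ℝ ∙ N)ᗮ.starProjection) N₀ := by
  have eq_sub_rankOne : (fun N : E => (ℝ ∙ N)ᗮ.starProjection) = fun N =>
      ContinuousLinearMap.id ℝ E - (‖N‖ ^ 2)⁻¹ • InnerProductSpace.rankOne ℝ N N := by
    ext N v
    simp [Submodule.starProjection_orthogonal_val, Submodule.starProjection_singleton, smul_smul]
    ring_nf
  have rankOne : Continuous fun N : E => InnerProductSpace.rankOne ℝ N N :=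
    (InnerProductSpace.rankOne ℝ (E := E) (F := E)).continuous₂.comp
      (continuous_id.prodMk continuous_id)
  have coeff : ContinuousAt (fun N : E => (‖N‖ ^ 2)⁻¹) N₀ :=
    (continuous_norm.pow 2).continuousAt.inv₀ (pow_ne_zero 2 (norm_ne_zero_iff.2 hN₀))
  rw [eq_sub_rankOne]
  exact continuousAt_const.sub (coeff.smul rankOne.continuousAt)

variable [CompleteSpace E] {f h : E → ℝ} {s : ℝ × E → ℝ} {O : Set (ℝ × E)} {q : ℝ × E} {x : E}

/-- The derivative of `gradient f` at `x`, precomposed with the orthogonal projection to the tangent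
space of the level set of `f` through `x`. -/
noncomputable def tangentialHessian (f : E → ℝ) (x : E) : E →L[ℝ] E :=
  fderiv ℝ (gradient f) x ∘L (ℝ ∙ gradient f x)ᗮ.starProjection

theorem continuousAt_tangentialHessian (hf : ContDiff ℝ 2 f) (hx : gradient f x ≠ 0) :
    ContinuousAt (tangentialHessian f) x := by
  have hN : ContDiff ℝ 1 (gradient f) := contDiff_gradient hf
  exact (hN.continuous_fderiv one_ne_zero).continuousAt.clm_comp
    ((continuousAt_starProjection_orthogonal_singleton hx).comp hN.continuous.continuousAt)

/-- The factor by which `fun x => normalShift f s (t, x)` scales the measure of the level sets of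
`f` at `x`, where `q = (t, x)`. -/
noncomputable def shiftJacobian (f h : E → ℝ) (s : ℝ × E → ℝ) (q : ℝ × E) : ℝ :=
  (1 + s q • tangentialHessian f q.2).det *
    secAngle (shiftedGradient f h s q) (gradient f q.2)

/-- The pairs `(t, x)` at which `fun y => normalShift f s (t, y)` is an immersion of the level set
of `f` through `x`, with a Jacobian given by `shiftJacobian`. -/
def regularShiftSet (f h : E → ℝ) (s : ℝ × E → ℝ) (O : Set (ℝ × E)) : Set (ℝ × E) :=
  {q ∈ O | 0 < (1 + s q • tangentialHessian f q.2).det ∧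
    0 < ⟪shiftedGradient f h s q, gradient f q.2⟫}

theorem shiftJacobian_pos (hq : q ∈ regularShiftSet f h s O) : 0 < shiftJacobian f h s q := by
  have hMN : 0 < ‖shiftedGradient f h s q‖ * ‖gradient f q.2‖ :=
    hq.2.2.trans_le (real_inner_le_norm _ _)
  exact mul_pos hq.2.1 (div_pos hMN hq.2.2)

namespace IsNormalDisplacement

theorem continuousAt_shiftedGradient (hs : IsNormalDisplacement f h s O) (hf : ContDiff ℝ 2 f)
    (hh : ContDiff ℝ 1 h) (hq : q ∈ O) : ContinuousAt (shiftedGradient f h s) q := by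
  have shift := (hs.contDiffAt_normalShift hf hq).continuousAt
  have hf' := (contDiff_gradient (n := 1) hf).continuous
  have hh' := (contDiff_gradient (n := 0) hh).continuous
  exact (hf'.continuousAt.comp shift).add (continuousAt_fst.smul (hh'.continuousAt.comp shift))

theorem shiftedGradient_zero (hs : IsNormalDisplacement f h s O) (hx : (0, x) ∈ O) :
    shiftedGradient f h s (0, x) = gradient f x := by
  simp [shiftedGradient, hs.normalShift_zero hx]

theorem shiftJacobian_zero (hs : IsNormalDisplacement f h s O) (hx : (0, x) ∈ O)
    (hN : gradient f x ≠ 0) : shiftJacobian f h s (0, x) = 1 := by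
  simp [shiftJacobian, hs.shiftedGradient_zero hx, hs.apply_zero x hx, secAngle_self hN,
    ContinuousLinearMap.det]

theorem isBigO_fst (hs : IsNormalDisplacement f h s O) (hx : (0, x) ∈ O) :
    s =O[𝓝 (0, x)] Prod.fst := by
  have pair : Tendsto (fun q : ℝ × E => (q, ((0 : ℝ), q.2))) (𝓝 (0, x)) (𝓝 ((0, x), (0, x))) :=
    Continuous.tendsto' (by fun_prop) _ _ rfl
  have := ((hs.contDiffAt hx).hasStrictFDerivAt one_ne_zero).isBigO_sub.comp_tendsto pair
  refine this.congr' ?_ .rfl |>.trans (isBigO_of_le _ fun q => by simp [Prod.norm_def])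
  have eventually_mem : ∀ᶠ q : ℝ × E in 𝓝 (0, x), (0, q.2) ∈ O :=
    (by fun_prop : Continuous fun q : ℝ × E => ((0 : ℝ), q.2)).continuousAt.eventually_mem
      (hs.isOpen.mem_nhds hx)
  filter_upwards [eventually_mem] with q hq
  simp [hs.apply_zero _ hq]

theorem shiftedGradient_sub_gradient_isBigO (hs : IsNormalDisplacement f h s O)
    (hf : ContDiff ℝ 2 f) (hh : ContDiff ℝ 1 h) (hx : (0, x) ∈ O) :
    (fun q => shiftedGradient f h s q - gradient f q.2) =O[𝓝 (0, x)] (Prod.fst : ℝ × E → ℝ) := by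
  have shift := (hs.contDiffAt_normalShift hf hx).continuousAt.tendsto
  rw [hs.normalShift_zero hx] at shift
  have hN : ContDiff ℝ 1 (gradient f) := contDiff_gradient hf
  have hN' := (contDiff_gradient (n := 0) hh).continuous
  have gradient_f : (fun q => gradient f (normalShift f s q) - gradient f q.2)
      =O[𝓝 (0, x)] (Prod.fst : ℝ × E → ℝ) :=
    calc (fun q => gradient f (normalShift f s q) - gradient f q.2)
        =O[𝓝 (0, x)] fun q => normalShift f s q - q.2 :=
          (hN.contDiffAt.hasStrictFDerivAt one_ne_zero).isBigO_sub.comp_tendsto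
            (shift.prodMk_nhds continuousAt_snd)
      _ =O[𝓝 (0, x)] Prod.fst := by
          simpa [normalShift] using (hs.isBigO_fst hx).smul
            ((hN.continuous.comp continuous_snd).continuousAt.tendsto.isBigO_one ℝ)
  have gradient_h : (fun q => q.1 • gradient h (normalShift f s q))
      =O[𝓝 (0, x)] (Prod.fst : ℝ × E → ℝ) := by
    simpa using (isBigO_refl (Prod.fst : ℝ × E → ℝ) _).smul
      ((hN'.continuousAt.tendsto.comp shift).isBigO_one ℝ)
  exact (gradient_f.add gradient_h).congr_left fun q => by simp only [shiftedGradient]; abel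

theorem secAngle_sub_one_isBigO (hs : IsNormalDisplacement f h s O)
    (hf : ContDiff ℝ 2 f) (hh : ContDiff ℝ 1 h) (hx : (0, x) ∈ O) (hN : gradient f x ≠ 0) :
    (fun q : ℝ × E => secAngle (shiftedGradient f h s q) (gradient f q.2) - 1)
      =O[𝓝 (0, x)] fun q => q.1 ^ 2 := by
  have shifted := (hs.continuousAt_shiftedGradient hf hh hx).tendsto
  rw [hs.shiftedGradient_zero hx] at shifted
  have original : Tendsto (fun q : ℝ × E => gradient f q.2) (𝓝 (0, x)) (𝓝 (gradient f x)) :=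
    ((contDiff_gradient (n := 1) hf).continuous.comp continuous_snd).continuousAt
  exact ((_root_.secAngle_sub_one_isBigO hN).comp_tendsto (shifted.prodMk_nhds original)).trans
    ((hs.shiftedGradient_sub_gradient_isBigO hf hh hx).norm_left.pow 2)

variable [FiniteDimensional ℝ E]

theorem continuousAt_det (hs : IsNormalDisplacement f h s O) (hf : ContDiff ℝ 2 f) (hq : q ∈ O)
    (hN : gradient f q.2 ≠ 0) :
    ContinuousAt (fun p => (1 + s p • tangentialHessian f p.2).det) q :=
  differentiable_det.continuous.continuousAt.comp (continuousAt_const.add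
    ((hs.contDiffAt hq).continuousAt.smul
      ((continuousAt_tangentialHessian hf hN).comp continuousAt_snd)))

theorem continuousAt_shiftJacobian (hs : IsNormalDisplacement f h s O) (hf : ContDiff ℝ 2 f)
    (hh : ContDiff ℝ 1 h) (hq : q ∈ O) (hMN : ⟪shiftedGradient f h s q, gradient f q.2⟫ ≠ 0) :
    ContinuousAt (shiftJacobian f h s) q := by
  have shifted := hs.continuousAt_shiftedGradient hf hh hq
  have original : ContinuousAt (fun p : ℝ × E => gradient f p.2) q :=
    ((contDiff_gradient (n := 1) hf).continuous.comp continuous_snd).continuousAt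
  exact (hs.continuousAt_det hf hq (fun hN => hMN (by simp [hN]))).mul
    ((shifted.norm.mul original.norm).div (shifted.inner original) hMN)

theorem det_sub_one_isBigO (hs : IsNormalDisplacement f h s O) (hf : ContDiff ℝ 2 f)
    (hx : (0, x) ∈ O) (hN : gradient f x ≠ 0) :
    (fun q : ℝ × E => (1 + s q • tangentialHessian f q.2).det - 1) =O[𝓝 (0, x)] Prod.fst := by
  have hT : Tendsto (fun q : ℝ × E => tangentialHessian f q.2) (𝓝 (0, x))
      (𝓝 (tangentialHessian f x)) :=
    (continuousAt_tangentialHessian hf hN).tendsto.comp continuousAt_snd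
  have hA : Tendsto (fun q => 1 + s q • tangentialHessian f q.2) (𝓝 (0, x)) (𝓝 1) := by
    simpa [hs.apply_zero x hx] using
      ((hs.contDiffAt hx).continuousAt.tendsto.smul hT).const_add 1
  calc (fun q : ℝ × E => (1 + s q • tangentialHessian f q.2).det - 1)
      =O[𝓝 (0, x)] fun q => s q • tangentialHessian f q.2 := by
        simpa [Function.comp_def, ContinuousLinearMap.det] using
          (differentiable_det (𝕜 := ℝ) (E := E) 1).isBigO_sub.comp_tendsto hA
    _ =O[𝓝 (0, x)] (Prod.fst : ℝ × E → ℝ) := by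
        simpa using (hs.isBigO_fst hx).smul (hT.isBigO_one ℝ)

theorem shiftJacobian_sub_one_isBigO (hs : IsNormalDisplacement f h s O) (hf : ContDiff ℝ 2 f)
    (hh : ContDiff ℝ 1 h) (hx : (0, x) ∈ O) (hN : gradient f x ≠ 0) :
    (fun q => shiftJacobian f h s q - 1) =O[𝓝 (0, x)] Prod.fst := by
  have fst_tendsto : Tendsto Prod.fst (𝓝 ((0 : ℝ), x)) (𝓝 0) := continuousAt_fst
  have sec : (fun q : ℝ × E => secAngle (shiftedGradient f h s q) (gradient f q.2) - 1)
      =O[𝓝 (0, x)] Prod.fst := by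
    refine (hs.secAngle_sub_one_isBigO hf hh hx hN).trans ?_
    simpa [sq] using (isBigO_refl Prod.fst _).mul (fst_tendsto.isBigO_one ℝ)
  have det_bounded := (hs.continuousAt_det hf hx hN).tendsto.isBigO_one ℝ
  refine (((sec.mul det_bounded).congr_right fun q => mul_one _).add
    (hs.det_sub_one_isBigO hf hx hN)).congr_left fun q => ?_
  rw [shiftJacobian]
  ring

theorem hasDerivAt_shiftJacobian (hs : IsNormalDisplacement f h s O) (hf : ContDiff ℝ 2 f)
    (hh : ContDiff ℝ 1 h) (hx : (0, x) ∈ O) (hN : gradient f x ≠ 0) :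
    HasDerivAt (fun t => shiftJacobian f h s (t, x))
      (-h x / ‖gradient f x‖ ^ 2 * LinearMap.trace ℝ E (tangentialHessian f x)) 0 := by
  have slice : Tendsto (fun t : ℝ => (t, x)) (𝓝 0) (𝓝 (0, x)) :=
    (Continuous.prodMk_left x).tendsto 0
  have sec : HasDerivAt
      (fun t => secAngle (shiftedGradient f h s (t, x)) (gradient f x)) 0 0 := by
    have bound : (fun t => secAngle (shiftedGradient f h s (t, x)) (gradient f x) - 1)
        =O[𝓝 0] fun t : ℝ => ‖t - 0‖ ^ 2 := by
      simpa [Function.comp_def] using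
        (hs.secAngle_sub_one_isBigO hf hh hx hN).comp_tendsto slice
    simpa using (bound.hasFDerivAt (𝕜 := ℝ) one_lt_two).hasDerivAt
  have det : HasDerivAt (fun t => (1 + s (t, x) • tangentialHessian f x).det)
      (LinearMap.trace ℝ E (tangentialHessian f x) * (-h x / ‖gradient f x‖ ^ 2)) 0 := by
    have displacement := hs.hasDerivAt_zero (hf.differentiable two_ne_zero x)
      (hh.differentiable one_ne_zero x) hx hN
    have at_zero := hasDerivAt_det_one_add_smul (tangentialHessian f x : E →ₗ[ℝ] E)
    rw [← hs.apply_zero x hx] at at_zero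
    exact at_zero.comp (0 : ℝ) displacement
  refine (det.mul sec).congr_deriv ?_
  rw [hs.shiftedGradient_zero hx, secAngle_self hN]
  ring

theorem eventually_forall_mem_regularShiftSet (hs : IsNormalDisplacement f h s O)
    (hf : ContDiff ℝ 2 f) (hh : ContDiff ℝ 1 h) {Z : Set E} (hZ : IsCompact Z)
    (hZO : {0} ×ˢ Z ⊆ O) (hreg : ∀ x ∈ Z, gradient f x ≠ 0) :
    ∀ᶠ t in 𝓝 (0 : ℝ), ∀ x ∈ Z, (t, x) ∈ regularShiftSet f h s O := by
  refine hZ.eventually_forall_of_forall_eventually fun x hx => ?_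
  have hxO : ((0 : ℝ), x) ∈ O := hZO ⟨rfl, hx⟩
  have original : ContinuousAt (fun p : ℝ × E => gradient f p.2) (0, x) :=
    ((contDiff_gradient (n := 1) hf).continuous.comp continuous_snd).continuousAt
  refine (hs.isOpen.eventually_mem hxO).and
    (((hs.continuousAt_det hf hxO (hreg x hx)).eventually (lt_mem_nhds ?_)).and
      (((hs.continuousAt_shiftedGradient hf hh hxO).inner original).eventually (lt_mem_nhds ?_)))
  · simp [hs.apply_zero x hxO, ContinuousLinearMap.det]
  · simpa only [hs.shiftedGradient_zero hxO] using real_inner_self_pos.2 (hreg x hx)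

theorem continuousOn_shiftJacobian (hs : IsNormalDisplacement f h s O) (hf : ContDiff ℝ 2 f)
    (hh : ContDiff ℝ 1 h) {Z : Set E} {t : ℝ} (ht : ∀ x ∈ Z, (t, x) ∈ regularShiftSet f h s O) :
    ContinuousOn (fun x => shiftJacobian f h s (t, x)) Z := fun x hx =>
  ((hs.continuousAt_shiftJacobian hf hh (ht x hx).1 (ht x hx).2.2.ne').comp
    (Continuous.prodMk_right t).continuousAt).continuousWithinAt

end IsNormalDisplacement

end ShiftJacobian

section FirstVariation

variable {E : Type*} [NormedAddCommGroup E] [InnerProductSpace ℝ E] [CompleteSpace E]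

theorem inner_fderiv_gradient (f : E → ℝ) (x v w : E) :
    ⟪fderiv ℝ (gradient f) x v, w⟫ = fderiv ℝ (fderiv ℝ f) x v w := by
  let fromDual : (E →L[ℝ] ℝ) ≃ₗᵢ[ℝ] E := (InnerProductSpace.toDual ℝ E).symm
  have fderiv_eq : fderiv ℝ (gradient f) x = fromDual ∘L fderiv ℝ (fderiv ℝ f) x :=
    fromDual.comp_fderiv
  rw [fderiv_eq]
  exact InnerProductSpace.toDual_symm_apply

variable [FiniteDimensional ℝ E] {f h : E → ℝ} {s : ℝ × E → ℝ} {O : Set (ℝ × E)} {q : ℝ × E}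
  {x : E} {c : ℝ}

theorem trace_fderiv_gradient (f : E → ℝ) (x : E) :
    LinearMap.trace ℝ E (fderiv ℝ (gradient f) x) = Δ f x := by
  rw [InnerProductSpace.laplacian_eq_iteratedFDeriv_stdOrthonormalBasis,
    LinearMap.trace_eq_sum_inner _ (stdOrthonormalBasis ℝ E)]
  simp [iteratedFDeriv_two_apply, ← inner_fderiv_gradient, real_inner_comm]

theorem trace_tangentialHessian (f : E → ℝ) (x : E) :
    LinearMap.trace ℝ E (tangentialHessian f x) =
      Δ f x - fderiv ℝ (fderiv ℝ f) x (‖gradient f x‖⁻¹ • gradient f x)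
        (‖gradient f x‖⁻¹ • gradient f x) := by
  rw [tangentialHessian, trace_comp_starProjection_orthogonal_singleton, trace_fderiv_gradient,
    real_inner_comm, inner_fderiv_gradient]

variable [MeasurableSpace E] [BorelSpace E]

theorem hausdorffMeasure_preimage_singleton_lt_top (hf : ContDiff ℝ 1 f)
    (hZ : IsCompact (f ⁻¹' {c})) (hreg : ∀ x ∈ f ⁻¹' {c}, gradient f x ≠ 0) :
    μH[(finrank ℝ E : ℝ) - 1] (f ⁻¹' {c}) < ∞ :=
  hZ.measure_lt_top_of_nhdsWithin fun x hx => by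
    rw [Measure.FiniteAtFilter, ← cast_finrank_orthogonal_singleton (hreg x hx)]
    exact (isStrictTangentAt_preimage_singleton
      (hf.contDiffAt.hasStrictFDerivAt one_ne_zero) c).exists_hausdorffMeasure_lt_top

namespace IsNormalDisplacement

theorem scalesMeasureAt_normalShift (hs : IsNormalDisplacement f h s O) (hf : ContDiff ℝ 2 f)
    (hh : ContDiff ℝ 1 h) (hq : q ∈ regularShiftSet f h s O) (c : ℝ) :
    ScalesMeasureAt μH[(finrank ℝ E : ℝ) - 1] (fun y => normalShift f s (q.1, y)) (f ⁻¹' {c})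
      (shiftJacobian f h s q).toNNReal q.2 := by
  have hN : gradient f q.2 ≠ 0 := fun hN => by simpa [hN] using hq.2.2
  have normDet_eq := normDet_domRestrict_one_add_smul_add_smulRight
    (H := fderiv ℝ (gradient f) q.2) (ℓ := fderiv ℝ s q ∘L .inr ℝ ℝ E) (s := s q) hq.2.2
    fun v hv => (hs.inner_fderiv_normalShift hf hh hq.1 v).trans
      (Submodule.mem_orthogonal_singleton_iff_inner_right.1 hv)
  change _ = |(1 + s q • tangentialHessian f q.2).det| * secAngle _ _ at normDet_eq
  rw [abs_of_pos hq.2.1, ← shiftJacobian] at normDet_eq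
  rw [← cast_finrank_orthogonal_singleton hN, ← normDet_eq]
  exact (isStrictTangentAt_preimage_singleton
    ((hf.of_le one_le_two).contDiffAt.hasStrictFDerivAt one_ne_zero) c).scalesMeasureAt
    (hs.hasStrictFDerivAt_normalShift hf hq.1)
    (injOn_of_normDet_domRestrict_ne_zero (normDet_eq.trans_ne (shiftJacobian_pos hq).ne'))

theorem hausdorffMeasure_image_normalShift (hs : IsNormalDisplacement f h s O)
    (hf : ContDiff ℝ 2 f) (hh : ContDiff ℝ 1 h) (hZ : IsCompact (f ⁻¹' {c})) {t : ℝ}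
    (hμ : μH[(finrank ℝ E : ℝ) - 1] (f ⁻¹' {c}) ≠ ∞)
    (ht : ∀ x ∈ f ⁻¹' {c}, (t, x) ∈ regularShiftSet f h s O)
    (hinj : InjOn (fun x => normalShift f s (t, x)) (f ⁻¹' {c})) :
    μH[(finrank ℝ E : ℝ) - 1] ((fun x => normalShift f s (t, x)) '' (f ⁻¹' {c})) =
      ENNReal.ofReal (∫ x in f ⁻¹' {c}, shiftJacobian f h s (t, x)
        ∂μH[(finrank ℝ E : ℝ) - 1]) := by
  have hJ := hs.continuousOn_shiftJacobian hf hh ht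
  rw [ofReal_integral_eq_lintegral_ofReal
    (hJ.integrableOn_of_subset_isCompact hZ hZ.measurableSet subset_rfl hμ)
    (ae_restrict_of_forall_mem hZ.measurableSet fun x hx => (shiftJacobian_pos (ht x hx)).le)]
  exact measure_image_eq_lintegral_of_scalesMeasureAt hZ.measurableSet
    (fun x hx => (hs.hasStrictFDerivAt_normalShift hf (ht x hx).1).continuousAt.continuousWithinAt)
    hinj (continuous_real_toNNReal.comp_continuousOn hJ)
    (fun x hx => (Real.toNNReal_pos.2 (shiftJacobian_pos (ht x hx))).ne')
    fun x hx => hs.scalesMeasureAt_normalShift hf hh (ht x hx) c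

theorem hasDerivAt_integral_shiftJacobian (hs : IsNormalDisplacement f h s O)
    (hf : ContDiff ℝ 2 f) (hh : ContDiff ℝ 1 h) {Z : Set E} (hZ : IsCompact Z)
    (hZO : {0} ×ˢ Z ⊆ O) (hreg : ∀ x ∈ Z, gradient f x ≠ 0) {μ : Measure E} (hμ : μ Z ≠ ∞) :
    HasDerivAt (fun t => ∫ x in Z, shiftJacobian f h s (t, x) ∂μ)
      (∫ x in Z, -h x / ‖gradient f x‖ ^ 2 * LinearMap.trace ℝ E (tangentialHessian f x) ∂μ) 0 := by
  have hxO : ∀ x ∈ Z, ((0 : ℝ), x) ∈ O := fun x hx => hZO ⟨rfl, hx⟩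
  have trace_continuous : Continuous fun A : E →L[ℝ] E => LinearMap.trace ℝ E A :=
    (LinearMap.trace ℝ E ∘ₗ ContinuousLinearMap.coeLM ℝ).continuous_of_finiteDimensional
  have deriv_continuous : ContinuousOn (fun x => -h x / ‖gradient f x‖ ^ 2 *
      LinearMap.trace ℝ E (tangentialHessian f x)) Z := fun x hx =>
    ((hh.continuous.neg.continuousAt.div
      ((contDiff_gradient (n := 1) hf).continuous.norm.pow 2).continuousAt
      (pow_ne_zero 2 (norm_ne_zero_iff.2 (hreg x hx)))).mul
      (trace_continuous.continuousAt.comp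
        (continuousAt_tangentialHessian hf (hreg x hx)))).continuousWithinAt
  refine hasDerivAt_setIntegral_of_isBigO hZ hZ.measurableSet hμ ?_ ?_
    (deriv_continuous.aestronglyMeasurable hZ.measurableSet) (fun x hx => ?_)
    fun x hx => hs.hasDerivAt_shiftJacobian hf hh (hxO x hx) (hreg x hx)
  · filter_upwards [hs.eventually_forall_mem_regularShiftSet hf hh hZ hZO hreg] with t ht
    exact (hs.continuousOn_shiftJacobian hf hh ht).aestronglyMeasurable hZ.measurableSet
  · exact (integrableOn_const hμ).congr_fun
      (fun x hx => (hs.shiftJacobian_zero (hxO x hx) (hreg x hx)).symm) hZ.measurableSet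
  · refine ((hs.shiftJacobian_sub_one_isBigO hf hh (hxO x hx) (hreg x hx)).mono ?_).congr' ?_ .rfl
    · exact (Filter.prod_mono_right _ nhdsWithin_le_nhds).trans nhds_prod_eq.ge
    · filter_upwards [tendsto_snd.eventually self_mem_nhdsWithin] with q hq
      rw [hs.shiftJacobian_zero (hxO q.2 hq) (hreg q.2 hq)]

end IsNormalDisplacement

end FirstVariation

theorem stmt2_general {E : Type*} [NormedAddCommGroup E] [InnerProductSpace ℝ E] [CompleteSpace E]
    [FiniteDimensional ℝ E] [MeasurableSpace E] [BorelSpace E] {f h : E → ℝ} {c : ℝ}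
    (hf : ContDiff ℝ 2 f) (hh : ContDiff ℝ 1 h) (hZ : IsCompact (f ⁻¹' {c}))
    (hreg : ∀ x ∈ f ⁻¹' {c}, gradient f x ≠ 0) :
    ∃ ε > (0 : ℝ), ∃ U : Set E, IsOpen U ∧ Bornology.IsBounded U ∧ f ⁻¹' {c} ⊆ U ∧
      (∀ t : ℝ, |t| < ε → μH[(finrank ℝ E : ℝ) - 1] {x ∈ U | f x + t * h x = c} ≠ ⊤) ∧
      HasDerivAt (fun t : ℝ => (μH[(finrank ℝ E : ℝ) - 1] {x ∈ U | f x + t * h x = c}).toReal)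
        (∫ x in f ⁻¹' {c},
          h x * (fderiv ℝ (fderiv ℝ f) x (‖gradient f x‖⁻¹ • gradient f x)
            (‖gradient f x‖⁻¹ • gradient f x) - Δ f x) / ‖gradient f x‖ ^ 2
          ∂μH[(finrank ℝ E : ℝ) - 1]) 0 := by
  obtain ⟨s, O, hs, hZO⟩ := exists_isNormalDisplacement hf hh hZ hreg
  obtain ⟨U, hU, U_bounded, hZU, levelSet_eq⟩ :=
    hs.exists_levelSet_eq_image_normalShift hf hZ hZO
  have hμ := (hausdorffMeasure_preimage_singleton_lt_top (hf.of_le one_le_two) hZ hreg).ne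
  have regular := hs.eventually_forall_mem_regularShiftSet hf hh hZ hZO hreg
  have measure_eq : ∀ᶠ t in 𝓝 0, μH[(finrank ℝ E : ℝ) - 1] {x ∈ U | f x + t * h x = c} =
      ENNReal.ofReal (∫ x in f ⁻¹' {c}, shiftJacobian f h s (t, x)
        ∂μH[(finrank ℝ E : ℝ) - 1]) := by
    filter_upwards [levelSet_eq, regular] with t ⟨hinj, heq⟩ ht
    rw [heq, hs.hausdorffMeasure_image_normalShift hf hh hZ hμ ht hinj]
  obtain ⟨ε, hε, measure_eq_of_lt⟩ := Metric.eventually_nhds_iff.1 measure_eq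
  refine ⟨ε, hε, U, hU, U_bounded, hZU, fun t ht => ?_, ?_⟩
  · rw [measure_eq_of_lt (by simpa using ht)]
    exact ENNReal.ofReal_ne_top
  refine ((hs.hasDerivAt_integral_shiftJacobian hf hh hZ hZO hreg hμ).congr_of_eventuallyEq
    ?_).congr_deriv (integral_congr_ae (.of_forall fun x => ?_))
  · filter_upwards [measure_eq, regular] with t heq ht
    rw [heq, ENNReal.toReal_ofReal (setIntegral_nonneg hZ.measurableSet fun x hx =>
      (shiftJacobian_pos (ht x hx)).le)]
  · simp only [trace_tangentialHessian]
    ring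

theorem laplacianApply_eq_laplacian {m : ℕ} (f : EuclideanSpace ℝ (Fin m) → ℝ)
    (x : EuclideanSpace ℝ (Fin m)) : laplacianApply f x = Δ f x := by
  rw [InnerProductSpace.laplacian_eq_iteratedFDeriv_orthonormalBasis f
    (EuclideanSpace.basisFun (Fin m) ℝ)]
  simp [laplacianApply, hessianApply, iteratedFDeriv_two_apply]

/-- First variation of the nodal volume for `C²` functions `f, h : ℝ^m → ℝ`
(`m ≥ 2`) with `Z = f⁻¹(0)` compact and `∇f ≠ 0` on `Z`: there are `ε > 0` and a bounded
open `U ⊇ Z` such that `φ(t) = ℋ^{m-1}({x ∈ U : f x + t h x = 0})` is finite for `|t| < ε`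
and `φ'(0) = ∫_Z h ⬝ (Hess f(ν,ν) − Δf) / ‖∇f‖² dℋ^{m-1}` with `ν = ∇f/‖∇f‖`. -/
theorem stmt2 {m : ℕ} (hm : 2 ≤ m)
    (f h : EuclideanSpace ℝ (Fin m) → ℝ)
    (hf : ContDiff ℝ 2 f) (hh : ContDiff ℝ 2 h)
    (hZ : IsCompact (f ⁻¹' {0}))
    (hreg : ∀ x ∈ f ⁻¹' {0}, gradient f x ≠ 0) :
    ∃ ε > (0 : ℝ), ∃ U : Set (EuclideanSpace ℝ (Fin m)),
      IsOpen U ∧ Bornology.IsBounded U ∧ f ⁻¹' {0} ⊆ U ∧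
      (∀ t : ℝ, |t| < ε → μH[(m : ℝ) - 1] {x ∈ U | f x + t * h x = 0} ≠ ⊤) ∧
      HasDerivAt
        (fun t : ℝ => (μH[(m : ℝ) - 1] {x ∈ U | f x + t * h x = 0}).toReal)
        (∫ x in f ⁻¹' {0},
          h x *
            (hessianApply f x (‖gradient f x‖⁻¹ • gradient f x)
                (‖gradient f x‖⁻¹ • gradient f x) -
              laplacianApply f x) / ‖gradient f x‖ ^ 2
          ∂μH[(m : ℝ) - 1]) 0 := by
  simpa only [hessianApply, laplacianApply_eq_laplacian, finrank_euclideanSpace_fin] using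
    stmt2_general hf (hh.of_le one_le_two) hZ hreg
end

section
/- Let N₀, N₁, N₂ ∈ ℕ and let X = (X₀, X₁, X₂) be a centered Gaussian random vector in ℝ^{N₀} × ℝ^{N₁} × ℝ^{N₂} with covariance matrix K, whose diagonal blocks K₁₁ and K₂₂ are the covariance matrices of X₁ and X₂ respectively. Let a, b ∈ ℕ and let p, q ∈ (1, ∞) be conjugate exponents (1/p + 1/q = 1) with p·a < rank(K₁₁) and q·b < rank(K₂₂). Let D > 0 and let F : ℝ^{N₀+N₁+N₂} → ℝ be measurable with |F(x)| ≤ D(1 + ‖x‖^D) for all x. Then E[|F(X)| · ‖X₁‖^{−a} · ‖X₂‖^{−b}] < ∞. Moreover, for fixed N₀, N₁, N₂, a, b, p, q and D there exists a constant C > 0, depending only on these data, such that whenever additionally ‖K‖ ≤ D, K₁₁ and K₂₂ are invertible, p·a < N₁ and q·b < N₂, one has E[|F(X)| · ‖X₁‖^{−a} · ‖X₂‖^{−b}] ≤ C·(1 + det(K₁₁)^{−1/2} + det(K₂₂)^{−1/2}). -/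
open MeasureTheory ProbabilityTheory
open scoped RealInnerProductSpace

/-- The covariance matrix `K = E[X Xᵀ]` of a random vector `X : Ω → ℝⁿ`. -/
noncomputable def covMat {Ω : Type} [MeasurableSpace Ω] (P : Measure Ω) {n : ℕ}
    (X : Ω → EuclideanSpace ℝ (Fin n)) : Matrix (Fin n) (Fin n) ℝ :=
  Matrix.of fun i j => ∫ ω, X ω i * X ω j ∂P

/-- The coordinates of the concatenated random vector `(X₀, X₁, X₂)`. -/
def tripleCoord {Ω : Type} {N₀ N₁ N₂ : ℕ}
    (X₀ : Ω → EuclideanSpace ℝ (Fin N₀)) (X₁ : Ω → EuclideanSpace ℝ (Fin N₁))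
    (X₂ : Ω → EuclideanSpace ℝ (Fin N₂)) :
    (Fin N₀ ⊕ (Fin N₁ ⊕ Fin N₂)) → Ω → ℝ
  | Sum.inl i => fun ω => X₀ ω i
  | Sum.inr (Sum.inl i) => fun ω => X₁ ω i
  | Sum.inr (Sum.inr i) => fun ω => X₂ ω i

/-- The full covariance matrix of the concatenated vector `(X₀, X₁, X₂)`. -/
noncomputable def fullCov {Ω : Type} [MeasurableSpace Ω] (P : Measure Ω) {N₀ N₁ N₂ : ℕ}
    (X₀ : Ω → EuclideanSpace ℝ (Fin N₀)) (X₁ : Ω → EuclideanSpace ℝ (Fin N₁))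
    (X₂ : Ω → EuclideanSpace ℝ (Fin N₂)) :
    Matrix (Fin N₀ ⊕ (Fin N₁ ⊕ Fin N₂)) (Fin N₀ ⊕ (Fin N₁ ⊕ Fin N₂)) ℝ :=
  Matrix.of fun i j => ∫ ω, tripleCoord X₀ X₁ X₂ i ω * tripleCoord X₀ X₁ X₂ j ω ∂P

/-- `(X₀, X₁, X₂)` is a centered (possibly degenerate) Gaussian vector: every linear
functional of it has a centered normal distribution. -/
def IsCenteredGaussianTriple {Ω : Type} [MeasurableSpace Ω] (P : Measure Ω) {N₀ N₁ N₂ : ℕ}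
    (X₀ : Ω → EuclideanSpace ℝ (Fin N₀)) (X₁ : Ω → EuclideanSpace ℝ (Fin N₁))
    (X₂ : Ω → EuclideanSpace ℝ (Fin N₂)) : Prop :=
  ∀ (u₀ : EuclideanSpace ℝ (Fin N₀)) (u₁ : EuclideanSpace ℝ (Fin N₁))
    (u₂ : EuclideanSpace ℝ (Fin N₂)), ∃ v : NNReal,
      P.map (fun ω => ⟪u₀, X₀ ω⟫ + ⟪u₁, X₁ ω⟫ + ⟪u₂, X₂ ω⟫) = gaussianReal 0 v

/-!
By the three-term Young inequality with exponents `s⁻¹ + p'⁻¹ + q'⁻¹ = 1`, where `p' > p` and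
`q' > q`, the expectation splits into `E|F(X)|^s`, `E‖X₁‖^(-p'a)` and `E‖X₂‖^(-q'b)`. Ranks are
integers, so `p'` and `q'` can be chosen in terms of `a, b, p, q` alone with `p'a < rank K₁₁` and
`q'b < rank K₂₂` still true. The first term is a polynomial moment of a Gaussian vector with bounded
variances. For the other two, the coordinates of `Xᵢ` along the eigenvectors of `Kᵢᵢ` with nonzero
eigenvalue `λⱼ` are independent, with joint density at most `∏ⱼ λⱼ^(-1/2)`; hence
`E‖Xᵢ‖^(-α) ≤ 1 + ∏ⱼ λⱼ^(-1/2) ∫_{‖x‖ < 1} ‖x‖^(-α) dx`, where `x` ranges over a space of dimension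
`rank Kᵢᵢ > α`, so that the integral is finite.
-/

open scoped ENNReal NNReal

theorem mul_mul_le_rpow_add_rpow_add_rpow (x y z : ℝ≥0∞) {r s t : ℝ} (hr : 0 < r) (hs : 0 < s)
    (ht : 0 < t) (h : r⁻¹ + s⁻¹ + t⁻¹ = 1) : x * y * z ≤ x ^ r + y ^ s + z ^ t := by
  set S := x ^ r + y ^ s + z ^ t
  calc x * y * z ≤ S ^ r⁻¹ * S ^ s⁻¹ * S ^ t⁻¹ := by
        gcongr
        · exact (ENNReal.le_rpow_inv_iff hr).2 (le_self_add.trans le_self_add)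
        · exact (ENNReal.le_rpow_inv_iff hs).2 (le_add_self.trans le_self_add)
        · exact (ENNReal.le_rpow_inv_iff ht).2 le_add_self
    _ = S := by
        rw [← ENNReal.rpow_add_of_nonneg _ _ (by positivity) (by positivity),
          ← ENNReal.rpow_add_of_nonneg _ _ (by positivity) (by positivity), h, ENNReal.rpow_one]

theorem exists_gt_forall_mul_lt_natCast {p a : ℝ} (hp : 0 ≤ p) (ha : 0 ≤ a) :
    ∃ p' > p, ∀ n : ℕ, p * a < n → p' * a < n := by
  have lt_floor_add_one : p * a < ⌊p * a⌋₊ + 1 := Nat.lt_floor_add_one _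
  obtain ⟨p', hpp', hp'⟩ : ∃ p' > p, p' * a < ⌊p * a⌋₊ + 1 := by
    rcases ha.eq_or_lt with rfl | ha
    · exact ⟨p + 1, lt_add_one p, by simp⟩
    · obtain ⟨p', hpp', hp'⟩ := exists_between ((lt_div_iff₀ ha).2 lt_floor_add_one)
      exact ⟨p', hpp', (lt_div_iff₀ ha).1 hp'⟩
  refine ⟨p', hpp', fun n hn => hp'.trans_le ?_⟩
  exact_mod_cast (Nat.floor_lt (by positivity)).2 hn

theorem exists_conjugate_triple_forall_mul_lt_natCast {a b p q : ℝ} (ha : 0 ≤ a) (hb : 0 ≤ b)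
    (hp : 0 < p) (hq : 0 < q) (hpq : 1 / p + 1 / q ≤ 1) :
    ∃ s p' q' : ℝ, 1 ≤ s ∧ 0 < p' ∧ 0 < q' ∧ s⁻¹ + p'⁻¹ + q'⁻¹ = 1 ∧
      (∀ n : ℕ, p * a < n → p' * a < n) ∧ ∀ n : ℕ, q * b < n → q' * b < n := by
  obtain ⟨p', hpp', hp'⟩ := exists_gt_forall_mul_lt_natCast hp.le ha
  obtain ⟨q', hqq', hq'⟩ := exists_gt_forall_mul_lt_natCast hq.le hb
  have p'_pos : 0 < p' := hp.trans hpp'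
  have q'_pos : 0 < q' := hq.trans hqq'
  have sum_lt_one : p'⁻¹ + q'⁻¹ < 1 := by
    have inv_p'_lt : p'⁻¹ < p⁻¹ := inv_strictAnti₀ hp hpp'
    have inv_q'_lt : q'⁻¹ < q⁻¹ := inv_strictAnti₀ hq hqq'
    rw [one_div, one_div] at hpq
    linarith
  have sum_pos : 0 < p'⁻¹ + q'⁻¹ := by positivity
  refine ⟨(1 - (p'⁻¹ + q'⁻¹))⁻¹, p', q', (one_le_inv₀ ?_).2 ?_, p'_pos, q'_pos, ?_, hp', hq'⟩
  · linarith
  · linarith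
  · rw [inv_inv]
    ring

theorem add_one_add_mul_add_one_add_mul_le_ofReal (C₀ C₁ C₂ : ℝ≥0) {d₁ d₂ : ℝ} (hd₁ : 0 ≤ d₁)
    (hd₂ : 0 ≤ d₂) :
    C₀ + (1 + C₁ * ENNReal.ofReal d₁) + (1 + C₂ * ENNReal.ofReal d₂) ≤
      ENNReal.ofReal ((C₀ + 2 + C₁ + C₂) * (1 + d₁ + d₂)) := by
  lift d₁ to ℝ≥0 using hd₁
  lift d₂ to ℝ≥0 using hd₂
  have le_mul : C₀ + (1 + C₁ * d₁) + (1 + C₂ * d₂) ≤ (C₀ + 2 + C₁ + C₂) * (1 + d₁ + d₂) := by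
    rw [← NNReal.coe_le_coe]
    push_cast
    nlinarith
  simp only [ENNReal.ofReal_coe_nnreal]
  calc _ ≤ (((C₀ + 2 + C₁ + C₂) * (1 + d₁ + d₂) : ℝ≥0) : ℝ≥0∞) := by exact_mod_cast le_mul
    _ = _ := by rw [← ENNReal.ofReal_coe_nnreal]; push_cast; rfl

theorem measure_pi_mono {ι : Type*} [Fintype ι] {α : ι → Type*} [∀ i, MeasurableSpace (α i)]
    {μ ν : ∀ i, Measure (α i)} [∀ i, SigmaFinite (μ i)] (h : ∀ i, μ i ≤ ν i) :
    Measure.pi μ ≤ Measure.pi ν := by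
  have outer_le : (Measure.pi μ).toOuterMeasure ≤
      OuterMeasure.pi fun i => (ν i).toOuterMeasure := by
    rw [OuterMeasure.le_pi]
    intro s _
    simpa only [Measure.coe_toOuterMeasure, Measure.pi_pi] using
      Finset.prod_le_prod' fun i _ => h i (s i)
  refine Measure.le_iff.2 fun s hs => ?_
  calc Measure.pi μ s ≤ OuterMeasure.pi (fun i => (ν i).toOuterMeasure) s := outer_le s
    _ = Measure.pi ν s := by rw [Measure.pi, toMeasure_apply _ _ hs]

theorem measure_pi_smul {ι : Type*} [Fintype ι] {α : ι → Type*} [∀ i, MeasurableSpace (α i)]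
    (c : ι → ℝ≥0) (μ : ∀ i, Measure (α i)) [∀ i, SigmaFinite (μ i)] :
    Measure.pi (fun i => c i • μ i) = (∏ i, c i) • Measure.pi μ := by
  refine Measure.pi_eq fun s _ => ?_
  simp only [Measure.smul_apply, Measure.pi_pi, ENNReal.smul_def, smul_eq_mul,
    Finset.prod_mul_distrib, ENNReal.ofNNReal_finsetProd]

theorem gaussianPDFReal_le_inv_sqrt (m : ℝ) (v : ℝ≥0) (x : ℝ) :
    gaussianPDFReal m v x ≤ (√v)⁻¹ := by
  rcases eq_or_ne v 0 with rfl | hv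
  · simp
  have exp_le_one : Real.exp (-(x - m) ^ 2 / (2 * v)) ≤ 1 :=
    Real.exp_le_one_iff.2 <| div_nonpos_of_nonpos_of_nonneg
      (neg_nonpos.2 <| sq_nonneg _) (by positivity)
  have le_two_pi_mul : (v : ℝ) ≤ 2 * Real.pi * v :=
    le_mul_of_one_le_left v.2 (by linarith [Real.pi_gt_three])
  calc gaussianPDFReal m v x ≤ (√(2 * Real.pi * v))⁻¹ :=
        mul_le_of_le_one_right (by positivity) exp_le_one
    _ ≤ (√v)⁻¹ := by gcongr

theorem gaussianReal_le_smul_volume (m : ℝ) {v : ℝ≥0} (hv : v ≠ 0) :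
    gaussianReal m v ≤ (√v)⁻¹.toNNReal • volume := by
  rw [gaussianReal_of_var_ne_zero _ hv]
  calc volume.withDensity (gaussianPDF m v)
      ≤ volume.withDensity fun _ => ENNReal.ofReal (√v)⁻¹ :=
        withDensity_mono <| .of_forall fun x =>
          ENNReal.ofReal_le_ofReal (gaussianPDFReal_le_inv_sqrt m v x)
    _ = (√v)⁻¹.toNNReal • volume := withDensity_const _

theorem pi_gaussianReal_le_smul_volume {ι : Type*} [Fintype ι] (m : ι → ℝ) {v : ι → ℝ≥0}
    (hv : ∀ i, v i ≠ 0) :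
    Measure.pi (fun i => gaussianReal (m i) (v i)) ≤ (∏ i, (√(v i))⁻¹.toNNReal) • volume :=
  (measure_pi_mono fun i => gaussianReal_le_smul_volume (m i) (hv i)).trans_eq
    (measure_pi_smul _ _)

theorem map_le_smul_volume_of_covariance_eq_zero {Ω ι : Type*} [MeasurableSpace Ω]
    {P : Measure Ω} [Fintype ι] {Y : ι → Ω → ℝ} (hY : HasGaussianLaw (fun ω => (Y · ω)) P)
    (hcov : ∀ i j, i ≠ j → cov[Y i, Y j; P] = 0) (hvar : ∀ i, Var[Y i; P] ≠ 0) :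
    P.map (fun ω => (Y · ω)) ≤ (∏ i, (√Var[Y i; P])⁻¹.toNNReal) • volume := by
  have := hY.isProbabilityMeasure
  have indep : iIndepFun Y P := hY.iIndepFun_of_covariance_eq_zero hcov
  rw [(iIndepFun_iff_map_fun_eq_pi_map fun i => (hY.eval i).aemeasurable).1 indep]
  have var_pos (i : ι) : 0 < Var[Y i; P] := (variance_nonneg _ _).lt_of_ne' (hvar i)
  simpa only [(hY.eval _).map_eq_gaussianReal, Real.coe_toNNReal _ (var_pos _).le] using
    pi_gaussianReal_le_smul_volume (fun i => P[Y i])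
      (v := fun i => Var[Y i; P].toNNReal) fun i => (Real.toNNReal_pos.2 (var_pos i)).ne'

theorem lintegral_ball_enorm_rpow_neg_lt_top {E : Type*} [NormedAddCommGroup E] [NormedSpace ℝ E]
    [FiniteDimensional ℝ E] [MeasurableSpace E] [BorelSpace E] (μ : Measure E)
    [μ.IsAddHaarMeasure] {α : ℝ} (hα : 0 ≤ α) (hαE : α < Module.finrank ℝ E) :
    ∫⁻ x in Metric.ball (0 : E) 1, ‖x‖ₑ ^ (-α) ∂μ < ∞ := by
  have finrank_pos : 0 < Module.finrank ℝ E := by exact_mod_cast hα.trans_lt hαE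
  have : Nontrivial E := Module.finrank_pos_iff.1 finrank_pos
  have integrable : IntegrableOn (fun x : E => ‖x‖ ^ (-α)) (Metric.ball 0 1) μ :=
    integrableOn_ball_of_norm_le_rpow (C := 1) finrank_pos hαE
      (.of_forall fun x => by rw [one_mul, Real.norm_of_nonneg (by positivity)])
      (Measurable.aestronglyMeasurable (by fun_prop))
  refine lt_of_eq_of_lt (lintegral_congr_ae (ae_restrict_of_ae ?_)) integrable.hasFiniteIntegral
  filter_upwards [Measure.ae_ne μ 0] with x hx
  rw [← ofReal_norm, ← ofReal_norm, Real.norm_of_nonneg (by positivity),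
    ENNReal.ofReal_rpow_of_pos (norm_pos_iff.2 hx)]

theorem enorm_rpow_neg_le_of_norm_le {E F : Type*} [NormedAddCommGroup E] [NormedAddCommGroup F]
    {x : E} {y : F} (h : ‖x‖ ≤ ‖y‖) {α : ℝ} (hα : 0 ≤ α) : ‖y‖ₑ ^ (-α) ≤ ‖x‖ₑ ^ (-α) := by
  simp only [ENNReal.rpow_neg]
  have enorm_le : ‖x‖ₑ ≤ ‖y‖ₑ := enorm_le_iff_norm_le.2 h
  gcongr

theorem lintegral_enorm_rpow_neg_le_of_le_smul {E : Type*} [NormedAddCommGroup E]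
    [MeasurableSpace E] [OpensMeasurableSpace E] {μ ν : Measure E} [IsProbabilityMeasure μ]
    {c : ℝ≥0} (hμν : μ ≤ c • ν) {α : ℝ} (hα : 0 ≤ α) :
    ∫⁻ x, ‖x‖ₑ ^ (-α) ∂μ ≤ 1 + c * ∫⁻ x in Metric.ball 0 1, ‖x‖ₑ ^ (-α) ∂ν := by
  rw [← lintegral_add_compl _ (measurableSet_ball (x := (0 : E)) (ε := 1)), add_comm]
  gcongr
  · calc ∫⁻ x in (Metric.ball 0 1)ᶜ, ‖x‖ₑ ^ (-α) ∂μ ≤ ∫⁻ _ in (Metric.ball (0 : E) 1)ᶜ, 1 ∂μ := by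
          refine setLIntegral_mono measurable_const fun x hx => ?_
          have norm_ge : ‖(1 : ℝ)‖ ≤ ‖x‖ := by simpa using hx
          simpa using enorm_rpow_neg_le_of_norm_le norm_ge hα
      _ ≤ 1 := by simpa using prob_le_one
  · calc ∫⁻ x in Metric.ball 0 1, ‖x‖ₑ ^ (-α) ∂μ
        ≤ ∫⁻ x in Metric.ball 0 1, ‖x‖ₑ ^ (-α) ∂(c • ν) :=
          lintegral_mono' (Measure.restrict_mono le_rfl hμν) le_rfl
      _ = c * ∫⁻ x in Metric.ball 0 1, ‖x‖ₑ ^ (-α) ∂ν := by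
          rw [Measure.restrict_smul, lintegral_smul_measure]; rfl

theorem norm_pi_inner_le_of_orthonormal {ι E : Type*} [Fintype ι] [NormedAddCommGroup E]
    [InnerProductSpace ℝ E] {e : ι → E} (he : Orthonormal ℝ e) (x : E) :
    ‖fun i => ⟪e i, x⟫‖ ≤ ‖x‖ :=
  (pi_norm_le_iff_of_nonneg (norm_nonneg x)).2 fun i => by
    simpa only [he.1 i, one_mul] using norm_inner_le_norm (𝕜 := ℝ) (e i) x

theorem ofReal_inv_norm_pow_le {E : Type*} [NormedAddCommGroup E] (x : E) (a : ℕ) :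
    ENNReal.ofReal (‖x‖ ^ a)⁻¹ ≤ ‖x‖ₑ ^ (-a : ℝ) := by
  rw [ENNReal.rpow_neg, ENNReal.rpow_natCast, ← ofReal_norm, ← ENNReal.ofReal_pow (norm_nonneg x)]
  exact ENNReal.ofReal_inv_le

theorem ofReal_abs_mul_inv_norm_pow_mul_inv_norm_pow_le {E₁ E₂ : Type*} [NormedAddCommGroup E₁]
    [NormedAddCommGroup E₂] (y : ℝ) (x₁ : E₁) (x₂ : E₂) (a b : ℕ) :
    ENNReal.ofReal (|y| * (‖x₁‖ ^ a)⁻¹ * (‖x₂‖ ^ b)⁻¹) ≤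
      ‖y‖ₑ * ‖x₁‖ₑ ^ (-a : ℝ) * ‖x₂‖ₑ ^ (-b : ℝ) := by
  rw [ENNReal.ofReal_mul (by positivity), ENNReal.ofReal_mul (abs_nonneg y),
    Real.enorm_eq_ofReal_abs]
  gcongr <;> exact ofReal_inv_norm_pow_le _ _

theorem lintegral_mul_enorm_rpow_neg_mul_enorm_rpow_neg_le {Ω E₁ E₂ : Type*} [MeasurableSpace Ω]
    {P : Measure Ω} [NormedAddCommGroup E₁] [MeasurableSpace E₁] [OpensMeasurableSpace E₁]
    [NormedAddCommGroup E₂] [MeasurableSpace E₂] [OpensMeasurableSpace E₂] (f : Ω → ℝ≥0∞)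
    {X₁ : Ω → E₁} {X₂ : Ω → E₂} (hX₁ : AEMeasurable X₁ P) (hX₂ : AEMeasurable X₂ P) (a b : ℝ)
    {s p q : ℝ} (hs : 0 < s) (hp : 0 < p) (hq : 0 < q) (h : s⁻¹ + p⁻¹ + q⁻¹ = 1) :
    ∫⁻ ω, f ω * ‖X₁ ω‖ₑ ^ (-a) * ‖X₂ ω‖ₑ ^ (-b) ∂P ≤
      ∫⁻ ω, f ω ^ s ∂P + ∫⁻ ω, ‖X₁ ω‖ₑ ^ (-(p * a)) ∂P + ∫⁻ ω, ‖X₂ ω‖ₑ ^ (-(q * b)) ∂P := by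
  rw [← lintegral_add_right' _ (hX₁.enorm.pow_const _),
    ← lintegral_add_right' _ (hX₂.enorm.pow_const _)]
  refine lintegral_mono fun ω => ?_
  simpa only [← ENNReal.rpow_mul, neg_mul, mul_comm a, mul_comm b] using
    mul_mul_le_rpow_add_rpow_add_rpow (f ω) (‖X₁ ω‖ₑ ^ (-a)) (‖X₂ ω‖ₑ ^ (-b)) hs hp hq h

theorem hasGaussianLaw_of_map_inner_eq_gaussianReal {Ω E : Type*} [MeasurableSpace Ω]
    {P : Measure Ω} [NormedAddCommGroup E] [InnerProductSpace ℝ E] [CompleteSpace E]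
    [MeasurableSpace E] [BorelSpace E] {X : Ω → E} (hX : AEMeasurable X P)
    (h : ∀ u : E, ∃ m v, P.map (fun ω => ⟪u, X ω⟫) = gaussianReal m v) :
    HasGaussianLaw X P := by
  refine ⟨isGaussian_of_map_eq_gaussianReal fun L => ?_⟩
  obtain ⟨m, v, hmv⟩ := h ((InnerProductSpace.toDual ℝ E).symm L)
  refine ⟨m, v, ?_⟩
  rw [AEMeasurable.map_map_of_aemeasurable (by fun_prop) hX, ← hmv]
  simp only [InnerProductSpace.toDual_symm_apply]
  rfl

theorem integral_eq_zero_of_map_inner_eq_gaussianReal {Ω E : Type*} [MeasurableSpace Ω]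
    {P : Measure Ω} [NormedAddCommGroup E] [InnerProductSpace ℝ E] [CompleteSpace E] {X : Ω → E}
    (hX : Integrable X P) (h : ∀ u : E, ∃ v, P.map (fun ω => ⟪u, X ω⟫) = gaussianReal 0 v) :
    P[X] = 0 := by
  refine ext_inner_left ℝ fun u => ?_
  obtain ⟨v, hv⟩ := h u
  calc ⟪u, P[X]⟫ = ∫ ω, ⟪u, X ω⟫ ∂P := (integral_inner hX u).symm
    _ = ∫ x, x ∂P.map fun ω => ⟪u, X ω⟫ :=
        (integral_map (hX.const_inner u).aemeasurable aestronglyMeasurable_id).symm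
    _ = ⟪u, 0⟫ := by rw [hv, integral_id_gaussianReal, inner_zero_right]

theorem hasGaussianLaw_and_integral_eq_zero {Ω E : Type*} [MeasurableSpace Ω] {P : Measure Ω}
    [NormedAddCommGroup E] [InnerProductSpace ℝ E] [CompleteSpace E] [SecondCountableTopology E]
    [MeasurableSpace E] [BorelSpace E] {X : Ω → E} (hX : AEMeasurable X P)
    (h : ∀ u : E, ∃ v, P.map (fun ω => ⟪u, X ω⟫) = gaussianReal 0 v) :
    HasGaussianLaw X P ∧ P[X] = 0 :=
  have gaussian_X : HasGaussianLaw X P :=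
    hasGaussianLaw_of_map_inner_eq_gaussianReal hX fun u => ⟨0, h u⟩
  ⟨gaussian_X, integral_eq_zero_of_map_inner_eq_gaussianReal gaussian_X.integrable h⟩

theorem hasGaussianLaw_pi_inner {Ω ι E : Type*} [MeasurableSpace Ω] {P : Measure Ω} [Finite ι]
    [NormedAddCommGroup E] [InnerProductSpace ℝ E] [MeasurableSpace E] [BorelSpace E] {X : Ω → E}
    (hX : HasGaussianLaw X P) (e : ι → E) : HasGaussianLaw (fun ω i => ⟪e i, X ω⟫) P :=
  have := Fintype.ofFinite ι
  hX.map_fun (ContinuousLinearMap.pi fun i => innerSL ℝ (e i))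

section CovarianceMatrix

theorem isHermitian_covMat {Ω : Type} [MeasurableSpace Ω] (P : Measure Ω) {n : ℕ}
    (X : Ω → EuclideanSpace ℝ (Fin n)) : (covMat P X).IsHermitian := by
  ext i j
  simp [covMat, mul_comm]

variable {Ω : Type} [MeasurableSpace Ω] {P : Measure Ω} {n : ℕ}
  {X : Ω → EuclideanSpace ℝ (Fin n)}

theorem integral_inner_mul_inner (hX : MemLp X 2 P) (u u' : EuclideanSpace ℝ (Fin n)) :
    ∫ ω, ⟪u, X ω⟫ * ⟪u', X ω⟫ ∂P = u.ofLp ⬝ᵥ ((covMat P X).mulVec u'.ofLp) := by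
  have integrable_mul (i j : Fin n) : Integrable (fun ω => X ω i * X ω j) P :=
    (hX.eval_piLp i).integrable_mul (hX.eval_piLp j)
  have inner_mul_inner (ω : Ω) :
      ⟪u, X ω⟫ * ⟪u', X ω⟫ = ∑ i, ∑ j, u i * u' j * (X ω i * X ω j) := by
    simp only [PiLp.inner_apply, Finset.sum_mul_sum, RCLike.inner_apply, conj_trivial]
    exact Finset.sum_congr rfl fun i _ => Finset.sum_congr rfl fun j _ => by ring
  simp only [inner_mul_inner]
  rw [integral_finsetSum _ fun i _ =>
    integrable_finsetSum _ fun j _ => (integrable_mul i j).const_mul _]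
  simp only [dotProduct, Matrix.mulVec, Finset.mul_sum]
  refine Finset.sum_congr rfl fun i _ => ?_
  rw [integral_finsetSum _ fun j _ => (integrable_mul i j).const_mul _]
  refine Finset.sum_congr rfl fun j _ => ?_
  rw [integral_const_mul, covMat, Matrix.of_apply]
  ring

theorem posSemidef_covMat (hX : MemLp X 2 P) : (covMat P X).PosSemidef :=
  .of_dotProduct_mulVec_nonneg (isHermitian_covMat P X) fun u => by
    rw [star_trivial, ← integral_inner_mul_inner hX (WithLp.toLp 2 u) (WithLp.toLp 2 u)]
    exact integral_nonneg fun ω => mul_self_nonneg _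

theorem covariance_inner_eigenvectorBasis [IsProbabilityMeasure P] (hX : MemLp X 2 P)
    (hX0 : P[X] = 0) (i j : Fin n) :
    cov[fun ω => ⟪(isHermitian_covMat P X).eigenvectorBasis i, X ω⟫,
      fun ω => ⟪(isHermitian_covMat P X).eigenvectorBasis j, X ω⟫; P] =
      if i = j then (isHermitian_covMat P X).eigenvalues i else 0 := by
  set hK := isHermitian_covMat P X
  set e := hK.eigenvectorBasis
  have mean_zero (i : Fin n) : P[fun ω => ⟪e i, X ω⟫] = 0 := by
    rw [integral_inner (hX.integrable one_le_two), hX0, inner_zero_right]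
  calc cov[fun ω => ⟪e i, X ω⟫, fun ω => ⟪e j, X ω⟫; P] = ∫ ω, ⟪e i, X ω⟫ * ⟪e j, X ω⟫ ∂P := by
        rw [covariance_eq_sub (hX.const_inner _) (hX.const_inner _), mean_zero, zero_mul, sub_zero]
        rfl
    _ = hK.eigenvalues j * ⟪e i, e j⟫ := by
        rw [integral_inner_mul_inner hX, hK.mulVec_eigenvectorBasis, dotProduct_smul, smul_eq_mul,
          real_inner_comm]
        rfl
    _ = if i = j then hK.eigenvalues i else 0 := by
        rw [orthonormal_iff_ite.1 e.orthonormal i j]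
        split_ifs with h <;> simp [h]

end CovarianceMatrix

/-- The pseudo-determinant of a Hermitian matrix, that is the product of its nonzero eigenvalues
with multiplicity. It takes the role of the determinant for degenerate covariance matrices. -/
noncomputable def pseudoDet {n : ℕ} {K : Matrix (Fin n) (Fin n) ℝ} (hK : K.IsHermitian) : ℝ :=
  ∏ i with hK.eigenvalues i ≠ 0, hK.eigenvalues i

theorem pseudoDet_eq_det {n : ℕ} {K : Matrix (Fin n) (Fin n) ℝ} (hK : K.IsHermitian)
    (hK' : IsUnit K) : pseudoDet hK = K.det := by
  have eigenvalues_ne_zero (i : Fin n) : hK.eigenvalues i ≠ 0 := by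
    have det_ne_zero : K.det ≠ 0 := ((Matrix.isUnit_iff_isUnit_det _).1 hK').ne_zero
    rw [hK.det_eq_prod_eigenvalues] at det_ne_zero
    exact_mod_cast Finset.prod_ne_zero_iff.1 det_ne_zero i (Finset.mem_univ i)
  rw [pseudoDet, Finset.filter_true_of_mem fun i _ => eigenvalues_ne_zero i,
    hK.det_eq_prod_eigenvalues]
  rfl

section NegativeMoments

variable {Ω : Type} [MeasurableSpace Ω] {P : Measure Ω} {n : ℕ}
  {X : Ω → EuclideanSpace ℝ (Fin n)}

theorem map_inner_eigenvectorBasis_le_smul_volume (hX : HasGaussianLaw X P) (hX0 : P[X] = 0)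
    {s : Finset (Fin n)} (hs : ∀ i ∈ s, (isHermitian_covMat P X).eigenvalues i ≠ 0) :
    P.map (fun ω (i : s) => ⟪(isHermitian_covMat P X).eigenvectorBasis i, X ω⟫) ≤
      (√(∏ i ∈ s, (isHermitian_covMat P X).eigenvalues i))⁻¹.toNNReal • volume := by
  have := hX.isProbabilityMeasure
  set hK := isHermitian_covMat P X
  let Y (i : s) (ω : Ω) : ℝ := ⟪hK.eigenvectorBasis i, X ω⟫
  have gaussian_Y : HasGaussianLaw (fun ω => (Y · ω)) P := hasGaussianLaw_pi_inner hX _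
  have cov_Y (i j : s) : cov[Y i, Y j; P] = if i = j then hK.eigenvalues i else 0 := by
    simpa only [Subtype.ext_iff] using covariance_inner_eigenvectorBasis hX.memLp_two hX0 i j
  have var_Y (i : s) : Var[Y i; P] = hK.eigenvalues i := by
    rw [← covariance_self (gaussian_Y.eval i).aemeasurable, cov_Y, if_pos rfl]
  have prod_eq : ∏ i : s, (√Var[Y i; P])⁻¹.toNNReal =
      (√(∏ i ∈ s, hK.eigenvalues i))⁻¹.toNNReal := by
    simp only [var_Y]
    rw [Real.sqrt_prod s fun i _ => (posSemidef_covMat hX.memLp_two).eigenvalues_nonneg i,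
      ← Finset.prod_inv_distrib, Real.toNNReal_prod_of_nonneg fun i _ => by positivity]
    exact Finset.prod_coe_sort s fun i => (√(hK.eigenvalues i))⁻¹.toNNReal
  rw [← prod_eq]
  exact map_le_smul_volume_of_covariance_eq_zero gaussian_Y
    (fun i j hij => by rw [cov_Y, if_neg hij]) fun i => by rw [var_Y]; exact hs i i.2

theorem lintegral_enorm_rpow_neg_le_of_eigenvalues_ne_zero (hX : HasGaussianLaw X P)
    (hX0 : P[X] = 0) {s : Finset (Fin n)}
    (hs : ∀ i ∈ s, (isHermitian_covMat P X).eigenvalues i ≠ 0) {α : ℝ} (hα : 0 ≤ α) :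
    ∫⁻ ω, ‖X ω‖ₑ ^ (-α) ∂P ≤
      1 + ENNReal.ofReal (√(∏ i ∈ s, (isHermitian_covMat P X).eigenvalues i))⁻¹ *
        ∫⁻ x in Metric.ball (0 : s → ℝ) 1, ‖x‖ₑ ^ (-α) := by
  have := hX.isProbabilityMeasure
  let e (i : s) := (isHermitian_covMat P X).eigenvectorBasis i
  have orthonormal_e : Orthonormal ℝ e :=
    (isHermitian_covMat P X).eigenvectorBasis.orthonormal.comp _ Subtype.val_injective
  have aemeasurable_inner : AEMeasurable (fun ω i => ⟪e i, X ω⟫) P :=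
    (hasGaussianLaw_pi_inner hX e).aemeasurable
  have := Measure.isProbabilityMeasure_map aemeasurable_inner
  calc ∫⁻ ω, ‖X ω‖ₑ ^ (-α) ∂P ≤ ∫⁻ ω, ‖fun i => ⟪e i, X ω⟫‖ₑ ^ (-α) ∂P :=
        lintegral_mono fun ω =>
          enorm_rpow_neg_le_of_norm_le (norm_pi_inner_le_of_orthonormal orthonormal_e (X ω)) hα
    _ = ∫⁻ x, ‖x‖ₑ ^ (-α) ∂P.map fun ω i => ⟪e i, X ω⟫ :=
        (lintegral_map' (f := fun x : s → ℝ => ‖x‖ₑ ^ (-α)) (by fun_prop) aemeasurable_inner).symm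
    _ ≤ _ := lintegral_enorm_rpow_neg_le_of_le_smul
        (map_inner_eigenvectorBasis_le_smul_volume hX hX0 hs) hα

theorem exists_forall_lintegral_enorm_rpow_neg_le (n : ℕ) {α : ℝ} (hα : 0 ≤ α) :
    ∃ C : ℝ≥0, ∀ (Ω : Type) [MeasurableSpace Ω] (P : Measure Ω)
      (X : Ω → EuclideanSpace ℝ (Fin n)), HasGaussianLaw X P → P[X] = 0 →
      α < (covMat P X).rank →
      ∫⁻ ω, ‖X ω‖ₑ ^ (-α) ∂P ≤
        1 + C * ENNReal.ofReal (√(pseudoDet (isHermitian_covMat P X)))⁻¹ := by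
  let I (s : Finset (Fin n)) : ℝ≥0∞ := ∫⁻ x in Metric.ball (0 : s → ℝ) 1, ‖x‖ₑ ^ (-α)
  have I_lt_top (s : Finset (Fin n)) (hs : α < s.card) : I s < ∞ :=
    lintegral_ball_enorm_rpow_neg_lt_top volume hα (by simpa using hs)
  lift ∑ s : Finset (Fin n) with α < s.card, I s to ℝ≥0 using
    (ENNReal.sum_lt_top.2 fun s hs => I_lt_top s (Finset.mem_filter.1 hs).2).ne with C hC
  refine ⟨C, fun Ω _ P X hX hX0 hrank => ?_⟩
  set hK := isHermitian_covMat P X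
  let s : Finset (Fin n) := {i | hK.eigenvalues i ≠ 0}
  have card_s : s.card = (covMat P X).rank := by
    rw [hK.rank_eq_card_non_zero_eigs, Fintype.card_subtype]
  have I_le : I s ≤ C := by
    rw [hC]
    exact Finset.single_le_sum_of_canonicallyOrdered (f := I)
      (Finset.mem_filter.2 ⟨Finset.mem_univ s, by rwa [card_s]⟩)
  calc ∫⁻ ω, ‖X ω‖ₑ ^ (-α) ∂P ≤ 1 + ENNReal.ofReal (√(pseudoDet hK))⁻¹ * I s :=
        lintegral_enorm_rpow_neg_le_of_eigenvalues_ne_zero hX hX0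
          (fun i hi => (Finset.mem_filter.1 hi).2) hα
    _ ≤ 1 + C * ENNReal.ofReal (√(pseudoDet hK))⁻¹ := by
        rw [mul_comm]
        gcongr

end NegativeMoments

section PositiveMoments

theorem lintegral_enorm_rpow_gaussianReal_zero_mean (v : ℝ≥0) {t : ℝ} (ht : 0 ≤ t) :
    ∫⁻ x, ‖x‖ₑ ^ t ∂gaussianReal 0 v =
      ENNReal.ofReal √v ^ t * ∫⁻ x, ‖x‖ₑ ^ t ∂gaussianReal 0 1 := by
  have gaussianReal_eq_map : gaussianReal 0 v = (gaussianReal 0 1).map (√v * ·) := by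
    rw [gaussianReal_map_const_mul, mul_zero, mul_one]
    congr 1
    exact NNReal.coe_injective (Real.sq_sqrt v.2).symm
  rw [gaussianReal_eq_map, lintegral_map (by fun_prop) (by fun_prop),
    ← lintegral_const_mul _ (by fun_prop)]
  refine lintegral_congr fun x => ?_
  rw [enorm_mul, ENNReal.mul_rpow_of_nonneg _ _ ht, Real.enorm_of_nonneg (Real.sqrt_nonneg _)]

theorem lintegral_enorm_rpow_gaussianReal_lt_top (m : ℝ) (v : ℝ≥0) {t : ℝ} (ht : 0 < t) :
    ∫⁻ x, ‖x‖ₑ ^ t ∂gaussianReal m v < ∞ := by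
  simpa [ht.le] using lintegral_rpow_enorm_lt_top_of_eLpNorm_lt_top (by simpa using ht) (by simp)
    (memLp_id_gaussianReal (μ := m) (v := v) t.toNNReal).2

theorem sum_rpow_le_card_rpow_mul_sum_rpow {ι : Type*} (s : Finset ι) (f : ι → ℝ≥0∞) {t : ℝ}
    (ht : 0 < t) : (∑ i ∈ s, f i) ^ t ≤ (s.card : ℝ≥0∞) ^ t * ∑ i ∈ s, f i ^ t := by
  rcases s.eq_empty_or_nonempty with rfl | hs
  · simp [ht]
  obtain ⟨m, hm, le_max⟩ := s.exists_max_image f hs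
  calc (∑ i ∈ s, f i) ^ t ≤ (s.card * f m) ^ t := by
        gcongr
        simpa only [nsmul_eq_mul] using Finset.sum_le_card_nsmul s f (f m) le_max
    _ = (s.card : ℝ≥0∞) ^ t * f m ^ t := ENNReal.mul_rpow_of_nonneg _ _ ht.le
    _ ≤ (s.card : ℝ≥0∞) ^ t * ∑ i ∈ s, f i ^ t := by
        gcongr
        exact Finset.single_le_sum_of_canonicallyOrdered (f := fun i => f i ^ t) hm

theorem enorm_le_sum_enorm {ι : Type*} [Fintype ι] (y : EuclideanSpace ℝ ι) :
    ‖y‖ₑ ≤ ∑ i, ‖y i‖ₑ := by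
  calc ‖y‖ₑ = ‖∑ i, y i • EuclideanSpace.basisFun ι ℝ i‖ₑ := by
        conv_lhs => rw [← (EuclideanSpace.basisFun ι ℝ).sum_repr y]
        rfl
    _ ≤ ∑ i, ‖y i • EuclideanSpace.basisFun ι ℝ i‖ₑ := enorm_sum_le _ _
    _ = ∑ i, ‖y i‖ₑ := by
        simp only [enorm_smul, ← ofReal_norm (EuclideanSpace.basisFun ι ℝ _),
          OrthonormalBasis.norm_eq_one, ENNReal.ofReal_one, mul_one]

theorem exists_forall_lintegral_enorm_rpow_le (ι : Type*) [Fintype ι] (V : ℝ) {t : ℝ}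
    (ht : 0 < t) :
    ∃ C : ℝ≥0, ∀ (Ω : Type) [MeasurableSpace Ω] (P : Measure Ω) (Y : Ω → EuclideanSpace ℝ ι),
      HasGaussianLaw Y P → P[Y] = 0 → (∀ i, Var[fun ω => Y ω i; P] ≤ V) →
      ∫⁻ ω, ‖Y ω‖ₑ ^ t ∂P ≤ C := by
  lift ∫⁻ x, ‖x‖ₑ ^ t ∂gaussianReal 0 1 to ℝ≥0 using
    (lintegral_enorm_rpow_gaussianReal_lt_top 0 1 ht).ne with M hM
  lift (Fintype.card ι : ℝ≥0∞) ^ t * ∑ _i : ι, ENNReal.ofReal √V ^ t * M to ℝ≥0 using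
    ENNReal.mul_ne_top (by finiteness) (ENNReal.sum_ne_top.2 fun _ _ => by finiteness) with C hC
  refine ⟨C, fun Ω _ P Y hY hY0 hV => ?_⟩
  have gaussian_coord (i : ι) : HasGaussianLaw (fun ω => Y ω i) P :=
    hY.map_fun (EuclideanSpace.proj i : EuclideanSpace ℝ ι →L[ℝ] ℝ)
  have mean_coord (i : ι) : P[fun ω => Y ω i] = 0 := by
    rw [← eval_integral_piLp fun j => (gaussian_coord j).integrable, hY0, PiLp.zero_apply]
  have moment_coord_le (i : ι) : ∫⁻ ω, ‖Y ω i‖ₑ ^ t ∂P ≤ ENNReal.ofReal √V ^ t * M := by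
    rw [← lintegral_map' (f := fun x : ℝ => ‖x‖ₑ ^ t) (by fun_prop)
      (gaussian_coord i).aemeasurable, (gaussian_coord i).map_eq_gaussianReal, mean_coord,
      lintegral_enorm_rpow_gaussianReal_zero_mean _ ht.le, ← hM,
      Real.coe_toNNReal _ (variance_nonneg _ _)]
    gcongr
    exact hV i
  calc ∫⁻ ω, ‖Y ω‖ₑ ^ t ∂P
      ≤ ∫⁻ ω, (Fintype.card ι : ℝ≥0∞) ^ t * ∑ i, ‖Y ω i‖ₑ ^ t ∂P :=
        lintegral_mono fun ω => (ENNReal.rpow_le_rpow (enorm_le_sum_enorm _) ht.le).trans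
          (sum_rpow_le_card_rpow_mul_sum_rpow Finset.univ _ ht)
    _ = (Fintype.card ι : ℝ≥0∞) ^ t * ∑ i, ∫⁻ ω, ‖Y ω i‖ₑ ^ t ∂P := by
        have aemeasurable_coord (i : ι) : AEMeasurable (fun ω => ‖Y ω i‖ₑ ^ t) P :=
          (gaussian_coord i).aemeasurable.enorm.pow_const t
        rw [lintegral_const_mul'' _
            (Finset.aemeasurable_fun_sum _ fun i _ => aemeasurable_coord i),
          lintegral_finsetSum' _ fun i _ => aemeasurable_coord i]
    _ ≤ C := by
        rw [hC]
        gcongr with i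
        exact moment_coord_le i

theorem enorm_rpow_le_of_abs_le_mul_one_add_rpow {E : Type*} [NormedAddCommGroup E] {x : E}
    {D s y : ℝ} (hD : 0 ≤ D) (hs : 1 ≤ s) (h : |y| ≤ D * (1 + ‖x‖ ^ D)) :
    ‖y‖ₑ ^ s ≤ ENNReal.ofReal D ^ s * (2 ^ (s - 1) * (1 + ‖x‖ₑ ^ (D * s))) := by
  have enorm_le : ‖y‖ₑ ≤ ENNReal.ofReal D * (1 + ‖x‖ₑ ^ D) := by
    rw [← ofReal_norm, ← ofReal_norm, ENNReal.ofReal_rpow_of_nonneg (norm_nonneg x) hD,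
      ← ENNReal.ofReal_one, ← ENNReal.ofReal_add zero_le_one (by positivity),
      ← ENNReal.ofReal_mul hD]
    exact ENNReal.ofReal_le_ofReal h
  calc ‖y‖ₑ ^ s ≤ (ENNReal.ofReal D * (1 + ‖x‖ₑ ^ D)) ^ s := by gcongr
    _ = ENNReal.ofReal D ^ s * (1 + ‖x‖ₑ ^ D) ^ s := ENNReal.mul_rpow_of_nonneg _ _ (by positivity)
    _ ≤ ENNReal.ofReal D ^ s * (2 ^ (s - 1) * (1 + ‖x‖ₑ ^ (D * s))) := by
        gcongr
        simpa only [ENNReal.one_rpow, ← ENNReal.rpow_mul] using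
          ENNReal.rpow_add_le_mul_rpow_add_rpow 1 (‖x‖ₑ ^ D) hs

theorem exists_forall_lintegral_enorm_rpow_le_of_abs_le (ι : Type*) [Fintype ι] (V : ℝ)
    {D s : ℝ} (hD : 0 < D) (hs : 1 ≤ s) :
    ∃ C : ℝ≥0, ∀ (Ω : Type) [MeasurableSpace Ω] (P : Measure Ω) (Y : Ω → EuclideanSpace ℝ ι),
      HasGaussianLaw Y P → P[Y] = 0 → (∀ i, Var[fun ω => Y ω i; P] ≤ V) →
      ∀ f : Ω → ℝ, (∀ ω, |f ω| ≤ D * (1 + ‖Y ω‖ ^ D)) → ∫⁻ ω, ‖f ω‖ₑ ^ s ∂P ≤ C := by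
  obtain ⟨M, hM⟩ := exists_forall_lintegral_enorm_rpow_le ι V (t := D * s) (by positivity)
  lift ENNReal.ofReal D ^ s * (2 ^ (s - 1) * (1 + M)) to ℝ≥0 using by finiteness with C hC
  refine ⟨C, fun Ω _ P Y hY hY0 hV f hf => ?_⟩
  have := hY.isProbabilityMeasure
  calc ∫⁻ ω, ‖f ω‖ₑ ^ s ∂P
      ≤ ∫⁻ ω, ENNReal.ofReal D ^ s * (2 ^ (s - 1) * (1 + ‖Y ω‖ₑ ^ (D * s))) ∂P :=
        lintegral_mono fun ω => enorm_rpow_le_of_abs_le_mul_one_add_rpow hD.le hs (hf ω)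
    _ = ENNReal.ofReal D ^ s * (2 ^ (s - 1) * (1 + ∫⁻ ω, ‖Y ω‖ₑ ^ (D * s) ∂P)) := by
        have aemeasurable_rpow : AEMeasurable (fun ω => 1 + ‖Y ω‖ₑ ^ (D * s)) P :=
          (hY.aemeasurable.enorm.pow_const _).const_add 1
        rw [lintegral_const_mul'' _ (aemeasurable_rpow.const_mul _),
          lintegral_const_mul'' _ aemeasurable_rpow, lintegral_add_left measurable_const,
          lintegral_one, measure_univ]
    _ ≤ C := by
        rw [hC]
        gcongr
        exact hM Ω P Y hY hY0 hV

end PositiveMoments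

section Triple

/-- The concatenation `(X₀, X₁, X₂)` as a random vector in a single Euclidean space, whose
coordinates are given by `tripleCoord`. -/
noncomputable def tripleVec {Ω : Type} {N₀ N₁ N₂ : ℕ} (X₀ : Ω → EuclideanSpace ℝ (Fin N₀))
    (X₁ : Ω → EuclideanSpace ℝ (Fin N₁)) (X₂ : Ω → EuclideanSpace ℝ (Fin N₂)) (ω : Ω) :
    EuclideanSpace ℝ (Fin N₀ ⊕ (Fin N₁ ⊕ Fin N₂)) :=
  WithLp.toLp 2 fun k => tripleCoord X₀ X₁ X₂ k ω

variable {Ω : Type} {N₀ N₁ N₂ : ℕ} {X₀ : Ω → EuclideanSpace ℝ (Fin N₀)}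
  {X₁ : Ω → EuclideanSpace ℝ (Fin N₁)} {X₂ : Ω → EuclideanSpace ℝ (Fin N₂)}

theorem norm_tripleVec (ω : Ω) :
    ‖tripleVec X₀ X₁ X₂ ω‖ = √(‖X₀ ω‖ ^ 2 + ‖X₁ ω‖ ^ 2 + ‖X₂ ω‖ ^ 2) := by
  simp only [EuclideanSpace.norm_sq_eq]
  simp only [EuclideanSpace.norm_eq, Fintype.sum_sum_type, ← add_assoc]
  rfl

variable [MeasurableSpace Ω] {P : Measure Ω}

theorem measurable_tripleVec (hX₀ : Measurable X₀) (hX₁ : Measurable X₁) (hX₂ : Measurable X₂) :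
    Measurable (tripleVec X₀ X₁ X₂) := by
  have measurable_tripleCoord (k) : Measurable (tripleCoord X₀ X₁ X₂ k) := by
    rcases k with k | k | k <;> simp only [tripleCoord] <;> fun_prop
  exact (WithLp.measurable_toLp 2 _).comp (measurable_pi_lambda _ measurable_tripleCoord)

theorem IsCenteredGaussianTriple.map_inner_tripleVec (hX : IsCenteredGaussianTriple P X₀ X₁ X₂)
    (u : EuclideanSpace ℝ (Fin N₀ ⊕ (Fin N₁ ⊕ Fin N₂))) :
    ∃ v, P.map (fun ω => ⟪u, tripleVec X₀ X₁ X₂ ω⟫) = gaussianReal 0 v := by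
  obtain ⟨v, hv⟩ := hX (WithLp.toLp 2 fun i => u (.inl i))
    (WithLp.toLp 2 fun i => u (.inr (.inl i))) (WithLp.toLp 2 fun i => u (.inr (.inr i)))
  refine ⟨v, ?_⟩
  rw [← hv]
  simp only [PiLp.inner_apply, Fintype.sum_sum_type, ← add_assoc]
  rfl

theorem variance_tripleVec_apply_le_fullCov [IsProbabilityMeasure P]
    (hX : Measurable (tripleVec X₀ X₁ X₂)) (k : Fin N₀ ⊕ (Fin N₁ ⊕ Fin N₂)) :
    Var[fun ω => tripleVec X₀ X₁ X₂ ω k; P] ≤ fullCov P X₀ X₁ X₂ k k := by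
  have measurable_coord : Measurable fun ω => tripleVec X₀ X₁ X₂ ω k :=
    (EuclideanSpace.proj (𝕜 := ℝ) k).measurable.comp hX
  refine (variance_le_expectation_sq measurable_coord.aestronglyMeasurable).trans_eq ?_
  simp only [Pi.pow_apply, sq]
  rfl

end Triple

theorem stmt3_general (N₀ N₁ N₂ : ℕ) {a b p q : ℝ} (ha : 0 ≤ a) (hb : 0 ≤ b) (hp : 0 < p)
    (hq : 0 < q) (hpq : 1 / p + 1 / q ≤ 1) {D : ℝ} (hD : 0 < D) (V : ℝ) :
    ∃ C > (0 : ℝ), ∀ (Ω : Type) [MeasurableSpace Ω] (P : Measure Ω)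
      (X₀ : Ω → EuclideanSpace ℝ (Fin N₀)) (X₁ : Ω → EuclideanSpace ℝ (Fin N₁))
      (X₂ : Ω → EuclideanSpace ℝ (Fin N₂)),
      Measurable X₀ → Measurable X₁ → Measurable X₂ →
      IsCenteredGaussianTriple P X₀ X₁ X₂ →
      ∀ F : EuclideanSpace ℝ (Fin N₀) × EuclideanSpace ℝ (Fin N₁) ×
          EuclideanSpace ℝ (Fin N₂) → ℝ,
      (∀ x₀ x₁ x₂, |F (x₀, x₁, x₂)| ≤ D * (1 + √(‖x₀‖ ^ 2 + ‖x₁‖ ^ 2 + ‖x₂‖ ^ 2) ^ D)) →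
      (∀ i, fullCov P X₀ X₁ X₂ i i ≤ V) →
      p * a < (covMat P X₁).rank → q * b < (covMat P X₂).rank →
      ∫⁻ ω, ‖F (X₀ ω, X₁ ω, X₂ ω)‖ₑ * ‖X₁ ω‖ₑ ^ (-a) * ‖X₂ ω‖ₑ ^ (-b) ∂P ≤
        ENNReal.ofReal (C * (1 + (√(pseudoDet (isHermitian_covMat P X₁)))⁻¹ +
          (√(pseudoDet (isHermitian_covMat P X₂)))⁻¹)) := by
  obtain ⟨s, p', q', hs, p'_pos, q'_pos, sum_eq_one, p'_mul_lt, q'_mul_lt⟩ :=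
    exists_conjugate_triple_forall_mul_lt_natCast ha hb hp hq hpq
  obtain ⟨C₀, hC₀⟩ := exists_forall_lintegral_enorm_rpow_le_of_abs_le
    (Fin N₀ ⊕ (Fin N₁ ⊕ Fin N₂)) V hD hs
  obtain ⟨C₁, hC₁⟩ := exists_forall_lintegral_enorm_rpow_neg_le N₁ (α := p' * a) (by positivity)
  obtain ⟨C₂, hC₂⟩ := exists_forall_lintegral_enorm_rpow_neg_le N₂ (α := q' * b) (by positivity)
  refine ⟨C₀ + 2 + C₁ + C₂, by positivity, ?_⟩
  intro Ω _ P X₀ X₁ X₂ hX₀ hX₁ hX₂ hX F hF hV hrank₁ hrank₂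
  have measurable_X := measurable_tripleVec hX₀ hX₁ hX₂
  obtain ⟨gaussian_X, mean_X⟩ :=
    hasGaussianLaw_and_integral_eq_zero measurable_X.aemeasurable hX.map_inner_tripleVec
  obtain ⟨gaussian_X₁, mean_X₁⟩ := hasGaussianLaw_and_integral_eq_zero hX₁.aemeasurable
    fun u => by simpa using hX 0 u 0
  obtain ⟨gaussian_X₂, mean_X₂⟩ := hasGaussianLaw_and_integral_eq_zero hX₂.aemeasurable
    fun u => by simpa using hX 0 0 u
  have := gaussian_X.isProbabilityMeasure
  calc ∫⁻ ω, ‖F (X₀ ω, X₁ ω, X₂ ω)‖ₑ * ‖X₁ ω‖ₑ ^ (-a) * ‖X₂ ω‖ₑ ^ (-b) ∂P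
      ≤ ∫⁻ ω, ‖F (X₀ ω, X₁ ω, X₂ ω)‖ₑ ^ s ∂P + ∫⁻ ω, ‖X₁ ω‖ₑ ^ (-(p' * a)) ∂P +
          ∫⁻ ω, ‖X₂ ω‖ₑ ^ (-(q' * b)) ∂P :=
        lintegral_mul_enorm_rpow_neg_mul_enorm_rpow_neg_le _ hX₁.aemeasurable hX₂.aemeasurable
          a b (by positivity) p'_pos q'_pos sum_eq_one
    _ ≤ C₀ + (1 + C₁ * ENNReal.ofReal (√(pseudoDet (isHermitian_covMat P X₁)))⁻¹) +
          (1 + C₂ * ENNReal.ofReal (√(pseudoDet (isHermitian_covMat P X₂)))⁻¹) := by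
        gcongr
        · refine hC₀ Ω P _ gaussian_X mean_X (fun k =>
            (variance_tripleVec_apply_le_fullCov measurable_X k).trans (hV k)) _ fun ω => ?_
          rw [norm_tripleVec]
          exact hF _ _ _
        · exact hC₁ Ω P X₁ gaussian_X₁ mean_X₁ (p'_mul_lt _ hrank₁)
        · exact hC₂ Ω P X₂ gaussian_X₂ mean_X₂ (q'_mul_lt _ hrank₂)
    _ ≤ _ := add_one_add_mul_add_one_add_mul_le_ofReal C₀ C₁ C₂ (by positivity) (by positivity)

/-- Uniform integrability of rational functions of Gaussian vectors: if
`X = (X₀, X₁, X₂)` is a centered Gaussian vector, `1/p + 1/q = 1`, `p·a < rank K₁₁`,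
`q·b < rank K₂₂`, and `|F(x)| ≤ D(1 + ‖x‖^D)`, then `E[|F(X)| ‖X₁‖⁻ᵃ ‖X₂‖⁻ᵇ] < ∞`;
moreover, for fixed `N₀, N₁, N₂, a, b, p, q, D` there is `C > 0` such that whenever in
addition `‖K‖ ≤ D`, `K₁₁, K₂₂` are invertible, `p·a < N₁` and `q·b < N₂`, one has
`E[|F(X)| ‖X₁‖⁻ᵃ ‖X₂‖⁻ᵇ] ≤ C (1 + det(K₁₁)^{-1/2} + det(K₂₂)^{-1/2})`. -/
theorem stmt3 (N₀ N₁ N₂ : ℕ) (a b : ℕ) (p q : ℝ)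
    (hp : 1 < p) (hq : 1 < q) (hpq : 1 / p + 1 / q = 1)
    (D : ℝ) (hD : 0 < D) :
    (∀ (Ω : Type) [MeasurableSpace Ω] (P : Measure Ω) [IsProbabilityMeasure P]
        (X₀ : Ω → EuclideanSpace ℝ (Fin N₀)) (X₁ : Ω → EuclideanSpace ℝ (Fin N₁))
        (X₂ : Ω → EuclideanSpace ℝ (Fin N₂)),
        Measurable X₀ → Measurable X₁ → Measurable X₂ →
        IsCenteredGaussianTriple P X₀ X₁ X₂ →
        ∀ F : EuclideanSpace ℝ (Fin N₀) × EuclideanSpace ℝ (Fin N₁) ×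
            EuclideanSpace ℝ (Fin N₂) → ℝ,
        Measurable F →
        (∀ x₀ x₁ x₂, |F (x₀, x₁, x₂)| ≤
          D * (1 + Real.sqrt (‖x₀‖ ^ 2 + ‖x₁‖ ^ 2 + ‖x₂‖ ^ 2) ^ D)) →
        p * (a : ℝ) < ((covMat P X₁).rank : ℝ) →
        q * (b : ℝ) < ((covMat P X₂).rank : ℝ) →
        ∫⁻ ω, ENNReal.ofReal
            (|F (X₀ ω, X₁ ω, X₂ ω)| * (‖X₁ ω‖ ^ a)⁻¹ * (‖X₂ ω‖ ^ b)⁻¹) ∂P < ⊤) ∧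
    ∃ C > (0 : ℝ),
      ∀ (Ω : Type) [MeasurableSpace Ω] (P : Measure Ω) [IsProbabilityMeasure P]
        (X₀ : Ω → EuclideanSpace ℝ (Fin N₀)) (X₁ : Ω → EuclideanSpace ℝ (Fin N₁))
        (X₂ : Ω → EuclideanSpace ℝ (Fin N₂)),
        Measurable X₀ → Measurable X₁ → Measurable X₂ →
        IsCenteredGaussianTriple P X₀ X₁ X₂ →
        ∀ F : EuclideanSpace ℝ (Fin N₀) × EuclideanSpace ℝ (Fin N₁) ×
            EuclideanSpace ℝ (Fin N₂) → ℝ,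
        Measurable F →
        (∀ x₀ x₁ x₂, |F (x₀, x₁, x₂)| ≤
          D * (1 + Real.sqrt (‖x₀‖ ^ 2 + ‖x₁‖ ^ 2 + ‖x₂‖ ^ 2) ^ D)) →
        (∀ i j, |fullCov P X₀ X₁ X₂ i j| ≤ D) →
        IsUnit (covMat P X₁) → IsUnit (covMat P X₂) →
        p * (a : ℝ) < (N₁ : ℝ) → q * (b : ℝ) < (N₂ : ℝ) →
        ∫⁻ ω, ENNReal.ofReal
            (|F (X₀ ω, X₁ ω, X₂ ω)| * (‖X₁ ω‖ ^ a)⁻¹ * (‖X₂ ω‖ ^ b)⁻¹) ∂P ≤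
          ENNReal.ofReal (C * (1 + (Real.sqrt (covMat P X₁).det)⁻¹ +
            (Real.sqrt (covMat P X₂).det)⁻¹)) := by
  have bound := stmt3_general N₀ N₁ N₂ (Nat.cast_nonneg a) (Nat.cast_nonneg b)
    (zero_lt_one.trans hp) (zero_lt_one.trans hq) hpq.le hD
  constructor
  · intro Ω _ P _ X₀ X₁ X₂ hX₀ hX₁ hX₂ hX F _ hF hrank₁ hrank₂
    let V := ∑ i, |fullCov P X₀ X₁ X₂ i i|
    have diag_le (i) : fullCov P X₀ X₁ X₂ i i ≤ V := (le_abs_self _).trans <|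
      Finset.single_le_sum (f := fun i => |fullCov P X₀ X₁ X₂ i i|) (fun _ _ => abs_nonneg _)
        (Finset.mem_univ i)
    obtain ⟨C, -, hC⟩ := bound V
    exact (lintegral_mono fun ω => ofReal_abs_mul_inv_norm_pow_mul_inv_norm_pow_le _ _ _ a b)
      |>.trans (hC Ω P X₀ X₁ X₂ hX₀ hX₁ hX₂ hX F hF diag_le hrank₁ hrank₂)
      |>.trans_lt ENNReal.ofReal_lt_top
  · obtain ⟨C, hC_pos, hC⟩ := bound D
    refine ⟨C, hC_pos, ?_⟩
    intro Ω _ P _ X₀ X₁ X₂ hX₀ hX₁ hX₂ hX F _ hF hK hK₁ hK₂ ha hb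
    rw [← pseudoDet_eq_det (isHermitian_covMat P X₁) hK₁,
      ← pseudoDet_eq_det (isHermitian_covMat P X₂) hK₂]
    exact (lintegral_mono fun ω => ofReal_abs_mul_inv_norm_pow_mul_inv_norm_pow_le _ _ _ a b)
      |>.trans (hC Ω P X₀ X₁ X₂ hX₀ hX₁ hX₂ hX F hF (fun i => (le_abs_self _).trans (hK i i))
        (by simpa [Matrix.rank_of_isUnit _ hK₁] using ha)
        (by simpa [Matrix.rank_of_isUnit _ hK₂] using hb))
end
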